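/- arXiv:cond-mat/0310227 — 4 statements merged into one kernel-verified Lean document; each statement's English description precedes it below -/
import Mathlib

section
/- For every integer k ≥ 3 and every real r with 0 < r ≤ 2^(k-1)·ln 2 − 2, the probability that a random k-CNF formula F_k(n, m) with m = ⌊rn⌋ clauses is satisfiable tends to 1 as n → ∞; that is, the ratio (number of satisfiable m-element subsets of the proper k-clauses on n variables) / C(2^k·C(n,k), m) tends to 1 as n → ∞. -/
/-- A proper `k`-clause on `n` Boolean variables: a set of `k` literals
on `k` distinct variables.  A literal is a pair `(v, s)`. -/
def IsProperClause (n k : ℕ) (C : Finset (Fin n × Bool)) : Prop :=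
  C.card = k ∧ (C.image Prod.fst).card = k

/-- An assignment `σ` satisfies a clause if it satisfies at least one literal. -/
def SatisfiesClause {n : ℕ} (σ : Fin n → Bool) (C : Finset (Fin n × Bool)) : Prop :=
  ∃ l ∈ C, σ l.1 = l.2

/-- A formula (set of clauses) is satisfiable if some assignment satisfies every clause. -/
def IsSatisfiable {n : ℕ} (F : Finset (Finset (Fin n × Bool))) : Prop :=
  ∃ σ : Fin n → Bool, ∀ C ∈ F, SatisfiesClause σ C

/-!
Weight each pair of an assignment and a clause by a function of the signs of its literals that
vanishes when the clause is violated, and give a formula the average over all assignments of the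
product of the weights of its clauses: a formula of nonzero weight is satisfiable. The weight may be
negative, so its Fourier expansion can be chosen to be constant up to level two. Two assignments of
overlap `x` then contribute at most `(1 + |x| ^ 3 / N) ^ m` to the second moment, where `N` is the
number of Fourier characters of level at least three, while overlap `x` has probability at most
`exp (-n * (log 2 - H((1 - x) / 2)))`. Up to the threshold the entropy term wins, with a margin
quadratic in `x`, so only overlaps close to `0` matter. For these the cubic term is negligible, the
second moment converges to the square of the first, and Chebyshev's inequality shows that the weight
is nonzero with probability tending to `1`. This is carried out for ordered lists of ordered clauses
with independent uniform literals, of which the sets of proper clauses make up a proportion bounded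
away from `0`.
-/

section EntropyGap

open Real

/-- The bound is the `[2/1]` Padé approximant of `log (1 + x)` at `0`. -/
lemma log_one_add_le_mul_div {x : ℝ} (hx : 0 ≤ x) : log (1 + x) ≤ x * (6 + x) / (6 + 4 * x) := by
  let f : ℝ → ℝ := fun y ↦ y * (6 + y) / (6 + 4 * y) - log (1 + y)
  have hderiv (y : ℝ) (hy : 0 ≤ y) :
      HasDerivAt f (4 * y ^ 3 / ((6 + 4 * y) ^ 2 * (1 + y))) y := by
    have hnum : HasDerivAt (fun y : ℝ ↦ y * (6 + y)) (1 * (6 + y) + y * 1) y :=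
      (hasDerivAt_id y).mul ((hasDerivAt_id y).const_add 6)
    have hden : HasDerivAt (fun y : ℝ ↦ 6 + 4 * y) (4 * 1) y :=
      ((hasDerivAt_id y).const_mul 4).const_add 6
    have hlog : HasDerivAt (fun y : ℝ ↦ log (1 + y)) (1 / (1 + y)) y :=
      ((hasDerivAt_id y).const_add 1).log (by positivity)
    convert! (hnum.div hden (by positivity)).sub hlog using 1
    field_simp
    ring
  have hmono : MonotoneOn f (Set.Ici 0) := by
    refine monotoneOn_of_deriv_nonneg (convex_Ici 0)
      (fun y hy ↦ (hderiv y hy).continuousAt.continuousWithinAt) ?_ ?_ <;>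
    simp only [interior_Ici, Set.mem_Ioi]
    · exact fun y hy ↦ (hderiv y hy.le).differentiableAt.differentiableWithinAt
    · intro y hy
      rw [(hderiv y hy.le).deriv]
      positivity
  have hf : f 0 ≤ f x := hmono Set.self_mem_Ici hx hx
  simpa [f] using hf

lemma log_one_add_le_sub_mul_sq {c x : ℝ} (hx : 0 ≤ x) (hc : c * (6 + 4 * x) ≤ 3) :
    log (1 + x) ≤ x - c * x ^ 2 := by
  refine (log_one_add_le_mul_div hx).trans ?_
  rw [div_le_iff₀ (by positivity)]
  linarith [mul_nonneg (sq_nonneg x) (sub_nonneg.2 hc)]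

lemma exp_neg_two_mul_le_one_sub {x : ℝ} (hx : 0 ≤ x) (hx' : x ≤ 1 / 2) :
    exp (-(2 * x)) ≤ 1 - x := by
  rw [← le_log_iff_exp_le (by linarith)]
  refine le_trans ?_ (one_sub_inv_le_log_of_pos (by linarith))
  rw [le_sub_comm, inv_le_iff_one_le_mul₀ (by linarith)]
  nlinarith

lemma pow_eq_exp_mul_log {x : ℝ} (hx : 0 < x) (n : ℕ) : x ^ n = exp (n * log x) := by
  rw [exp_nat_mul, exp_log hx]

/-- The gap `log 2 - H((1 - x) / 2)` between the maximal binary entropy and the entropy of a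
`±1`-valued variable of mean `x`: the large deviation rate of the mean of fair signs. -/
noncomputable def entropyGap (x : ℝ) : ℝ :=
  log 2 - binEntropy ((1 - x) / 2)

lemma entropyGap_abs (x : ℝ) : entropyGap |x| = entropyGap x := by
  rcases abs_choice x with h | h
  · rw [h]
  · rw [h, entropyGap, entropyGap, ← binEntropy_one_sub]
    ring_nf

lemma continuous_entropyGap : Continuous entropyGap := by
  unfold entropyGap
  fun_prop

lemma hasDerivAt_entropyGap {x : ℝ} (hx : |x| < 1) :
    HasDerivAt entropyGap ((log (1 + x) - log (1 - x)) / 2) x := by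
  obtain ⟨hneg, hpos⟩ := abs_lt.1 hx
  have hinner : HasDerivAt (fun y : ℝ ↦ (1 - y) / 2) (-1 / 2) x :=
    ((hasDerivAt_id x).const_sub 1).div_const 2
  have hentropy := hasDerivAt_binEntropy (p := (1 - x) / 2) (by linarith) (by linarith)
  convert! (hentropy.comp x hinner).const_sub (log 2) using 1
  rw [show 1 - (1 - x) / 2 = (1 + x) / 2 by ring, log_div (by linarith) two_ne_zero,
    log_div (by linarith) two_ne_zero]
  ring

/-- The derivative of `entropyGap` is `artanh`, whose Taylor coefficients are nonnegative. -/
lemma sum_pow_div_le_entropyGap (N : ℕ) {x : ℝ} (hx : 0 ≤ x) (hx' : x ≤ 1) :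
    ∑ i ∈ Finset.range N, x ^ (2 * i + 2) / ((2 * i + 1) * (2 * i + 2)) ≤ entropyGap x := by
  let p : ℝ → ℝ := fun y ↦ ∑ i ∈ Finset.range N, y ^ (2 * i + 2) / ((2 * i + 1) * (2 * i + 2))
  have hp (y : ℝ) : HasDerivAt p (∑ i ∈ Finset.range N, y ^ (2 * i + 1) / (2 * i + 1)) y := by
    refine HasDerivAt.fun_sum fun i _ ↦ ?_
    convert! (hasDerivAt_pow (2 * i + 2) y).div_const (((2 : ℝ) * i + 1) * (2 * i + 2)) using 1
    push_cast
    field_simp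
  have hderiv (y : ℝ) (hy : y ∈ Set.Ioo 0 1) := (hasDerivAt_entropyGap
    (abs_lt.2 ⟨by linarith [hy.1], hy.2⟩)).sub (hp y)
  have hmono : MonotoneOn (entropyGap - p) (Set.Icc 0 1) := by
    refine monotoneOn_of_deriv_nonneg (convex_Icc 0 1)
      (continuous_entropyGap.sub (by fun_prop)).continuousOn ?_ ?_ <;>
    simp only [interior_Icc]
    · exact fun y hy ↦ (hderiv y hy).differentiableAt.differentiableWithinAt
    · intro y hy
      have hseries := hasSum_log_sub_log_of_abs_lt_one (abs_lt.2 ⟨by linarith [hy.1], hy.2⟩)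
      have hpartial := sum_le_hasSum (Finset.range N)
        (fun i _ ↦ by have := hy.1; positivity) hseries
      rw [(hderiv y hy).deriv, sub_nonneg, le_div_iff₀ two_pos, Finset.sum_mul]
      exact (Finset.sum_le_sum fun i _ ↦ by ring_nf; rfl).trans hpartial
  have hgap : (entropyGap - p) 0 ≤ (entropyGap - p) x := hmono (by simp) ⟨hx, hx'⟩ hx
  simpa [p, entropyGap] using hgap

lemma choose_le_exp_mul_binEntropy {n z : ℕ} (hz : z ≤ n) :
    (n.choose z : ℝ) ≤ exp (n * binEntropy (z / n)) := by
  rcases Nat.eq_zero_or_pos z with rfl | hz0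
  · simp
  rcases hz.eq_or_lt with rfl | hzn
  · simp [hz0.ne']
  have hn : (0 : ℝ) < n := by exact_mod_cast hz0.trans hzn
  set p : ℝ := z / n
  have hp : 0 < p := by positivity
  have hq : 0 < 1 - p := sub_pos.2 ((div_lt_one hn).2 (by exact_mod_cast hzn))
  have hterm : p ^ z * (1 - p) ^ (n - z) * n.choose z ≤ 1 := by
    have hsum := add_pow p (1 - p) n
    rw [add_sub_cancel, one_pow] at hsum
    exact (Finset.single_le_sum (f := fun i ↦ p ^ i * (1 - p) ^ (n - i) * (n.choose i : ℝ))
      (fun i _ ↦ by positivity) (Finset.mem_range_succ_iff.2 hz)).trans_eq hsum.symm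
  have hentropy : p ^ z * (1 - p) ^ (n - z) = exp (-(n * binEntropy p)) := by
    have hzp : (z : ℝ) = n * p := by simp only [p]; field_simp
    rw [pow_eq_exp_mul_log hp, pow_eq_exp_mul_log hq, ← exp_add,
      binEntropy_eq_negMulLog_add_negMulLog_one_sub, negMulLog, negMulLog, Nat.cast_sub hz, hzp]
    ring_nf
  rwa [hentropy, exp_neg, inv_mul_le_one₀ (exp_pos _)] at hterm

lemma choose_div_two_pow_le {n z : ℕ} (hz : z ≤ n) :
    (n.choose z : ℝ) / 2 ^ n ≤ exp (-(n * entropyGap |1 - 2 * z / n|)) := by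
  have hgap : entropyGap |1 - 2 * z / n| = log 2 - binEntropy (z / n) := by
    rw [entropyGap_abs, entropyGap]
    ring_nf
  rw [hgap, pow_eq_exp_mul_log two_pos, div_le_iff₀ (exp_pos _), ← exp_add]
  refine (choose_le_exp_mul_binEntropy hz).trans_eq ?_
  ring_nf

end EntropyGap

section HighOrder

open Finset

/-- The sets of at least three of the `k` positions of a clause: the Fourier levels on which the
clause weight is supported, besides the constant one. -/
def largeSubsets (k : ℕ) : Finset (Finset (Fin k)) := {S | 3 ≤ #S}

lemma card_largeSubsets_add (k : ℕ) : #(largeSubsets k) + (1 + k + k.choose 2) = 2 ^ k := by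
  have hsmall : ({S | ¬ 3 ≤ #S} : Finset (Finset (Fin k))) =
      (range 3).biUnion fun j ↦ powersetCard j univ := by
    ext S
    simp [Nat.lt_succ_iff]
  have hcard : #({S | ¬ 3 ≤ #S} : Finset (Finset (Fin k))) = 1 + k + k.choose 2 := by
    rw [hsmall, card_biUnion fun i _ j _ hij ↦ pairwise_disjoint_powersetCard univ hij]
    simp [sum_range_succ]
  rw [← hcard, largeSubsets, card_filter_add_card_filter_not]
  simp

lemma card_largeSubsets_pos {k : ℕ} (hk : 3 ≤ k) : 0 < #(largeSubsets k) :=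
  card_pos.2 ⟨univ, by simpa [largeSubsets] using hk⟩

lemma tangent_le_pow {a x : ℝ} (ha : 0 < a) (hx : 0 ≤ x) (e : ℕ) :
    a ^ e * (1 + e * (x / a - 1)) ≤ x ^ e := by
  have hratio : 0 ≤ x / a := by positivity
  have hbernoulli := one_add_mul_le_pow (a := x / a - 1) (by linarith) e
  rwa [add_sub_cancel, div_pow, le_div_iff₀' (by positivity)] at hbernoulli

-- The constants `0.7726` and `3.5452` are `2 ^ (k - 1) * log 2 - 2`, rounded up, for `k = 3` and
-- `k = 4`; the tangents are taken close to the minimum of the polynomial.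
lemma mul_log_one_add_cube_le_entropyGap {x : ℝ} (hx : 0 ≤ x) (hx' : x ≤ 1) :
    0.7726 * Real.log (1 + x ^ 3) ≤ entropyGap x - x ^ 2 / 1000 := by
  have hlog : Real.log (1 + x ^ 3) ≤ x ^ 3 - 0.3 * (x ^ 3) ^ 2 :=
    log_one_add_le_sub_mul_sq (by positivity) (by linarith [pow_le_one₀ (n := 3) hx hx'])
  have hgap := sum_pow_div_le_entropyGap 2 hx hx'
  have hpoly : 0 ≤ 1 / 2 - 1 / 1000 + x ^ 2 / 12 - 0.7726 * (x - 0.3 * x ^ 4) := by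
    have h2 := tangent_le_pow (a := 0.81) (by norm_num) hx 2
    have h4 := tangent_le_pow (a := 0.81) (by norm_num) hx 4
    norm_num at h2 h4
    linarith
  norm_num [sum_range_succ] at hgap
  linarith [mul_nonneg (sq_nonneg x) hpoly]

lemma mul_log_one_add_cube_div_five_le_entropyGap {x : ℝ} (hx : 0 ≤ x) (hx' : x ≤ 1) :
    3.5452 * Real.log (1 + x ^ 3 / 5) ≤ entropyGap x - x ^ 2 / 1000 := by
  have hlog : Real.log (1 + x ^ 3 / 5) ≤ x ^ 3 / 5 - 0.44 * (x ^ 3 / 5) ^ 2 :=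
    log_one_add_le_sub_mul_sq (by positivity) (by linarith [pow_le_one₀ (n := 3) hx hx'])
  have hgap := sum_pow_div_le_entropyGap 6 hx hx'
  have hpoly : 0 ≤ 1 / 2 - 1 / 1000 + x ^ 2 / 12 + x ^ 4 / 30 + x ^ 6 / 56 + x ^ 8 / 90
      + x ^ 10 / 132 - 3.5452 * (x / 5 - 0.44 * x ^ 4 / 25) := by
    have tangent := tangent_le_pow (a := 0.945) (by norm_num) hx
    have h2 := tangent 2
    have h4 := tangent 4
    have h6 := tangent 6
    have h8 := tangent 8
    have h10 := tangent 10
    norm_num at h2 h4 h6 h8 h10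
    linarith
  norm_num [sum_range_succ] at hgap
  linarith [mul_nonneg (sq_nonneg x) hpoly]

lemma mul_cube_le_entropyGap {x : ℝ} (hx : 0 ≤ x) (hx' : x ≤ 1) :
    0.57 * x ^ 3 ≤ entropyGap x - x ^ 2 / 1000 := by
  have hgap := sum_pow_div_le_entropyGap 2 hx hx'
  have hpoly : 0 ≤ 1 / 2 - 1 / 1000 + x ^ 2 / 12 - 0.57 * x := by nlinarith
  norm_num [sum_range_succ] at hgap
  linarith [mul_nonneg (sq_nonneg x) hpoly]

lemma two_pow_mul_log_two_sub_two_le {k : ℕ} (hk : 5 ≤ k) :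
    2 ^ (k - 1) * Real.log 2 - 2 ≤ 0.57 * #(largeSubsets k) := by
  have hcard : (#(largeSubsets k) : ℝ) = 2 ^ k - (1 + k + k * (k - 1) / 2) := by
    rw [eq_sub_iff_add_eq, ← Nat.cast_choose_two]
    exact_mod_cast card_largeSubsets_add k
  rw [hcard]
  clear hcard
  have hlog := Real.log_two_lt_d9
  induction k, hk using Nat.le_induction with
  | base => norm_num; linarith
  | succ k hk ih =>
    have hk' : (5 : ℝ) ≤ k := by exact_mod_cast hk
    rw [Nat.add_sub_cancel, pow_succ]
    rw [← mul_pow_sub_one (by lia : k ≠ 0) (2 : ℝ)] at ih ⊢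
    push_cast
    nlinarith

lemma mul_log_one_add_cube_div_le_entropyGap {k : ℕ} (hk : 3 ≤ k) {r : ℝ} (hr0 : 0 ≤ r)
    (hr : r ≤ 2 ^ (k - 1) * Real.log 2 - 2) {x : ℝ} (hx : 0 ≤ x) (hx' : x ≤ 1) :
    r * Real.log (1 + x ^ 3 / #(largeSubsets k)) ≤ entropyGap x - x ^ 2 / 1000 := by
  have hlog := Real.log_two_lt_d9
  have hcard := card_largeSubsets_add k
  have hnonneg (N : ℕ) : 0 ≤ Real.log (1 + x ^ 3 / N) :=
    Real.log_nonneg (le_add_of_nonneg_right (by positivity))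
  obtain rfl | rfl | hk : k = 3 ∨ k = 4 ∨ 5 ≤ k := by lia
  · have hone : #(largeSubsets 3) = 1 := by simpa [Nat.choose_two_right] using hcard
    have hr' : r ≤ 0.7726 := by norm_num at hr; linarith
    rw [hone]
    exact (mul_le_mul_of_nonneg_right hr' (hnonneg 1)).trans
      (by simpa using mul_log_one_add_cube_le_entropyGap hx hx')
  · have hfive : #(largeSubsets 4) = 5 := by simpa [Nat.choose_two_right] using hcard
    have hr' : r ≤ 3.5452 := by norm_num at hr; linarith
    rw [hfive]
    exact (mul_le_mul_of_nonneg_right hr' (hnonneg 5)).trans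
      (by simpa using mul_log_one_add_cube_div_five_le_entropyGap hx hx')
  · have hpos : (0 : ℝ) < #(largeSubsets k) := by
      exact_mod_cast card_largeSubsets_pos (by lia : 3 ≤ k)
    calc r * Real.log (1 + x ^ 3 / #(largeSubsets k))
        ≤ r * (x ^ 3 / #(largeSubsets k)) := by
          gcongr
          linarith [Real.log_le_sub_one_of_pos (by positivity : 0 < 1 + x ^ 3 / #(largeSubsets k))]
      _ ≤ 0.57 * #(largeSubsets k) * (x ^ 3 / #(largeSubsets k)) := by
          gcongr
          exact hr.trans (two_pow_mul_log_two_sub_two_le hk)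
      _ = 0.57 * x ^ 3 := by field_simp
      _ ≤ entropyGap x - x ^ 2 / 1000 := mul_cube_le_entropyGap hx hx'

end HighOrder

section Expectation

open Finset
open scoped BigOperators

lemma prod_expect {J Ω : Type*} [Fintype J] [DecidableEq J] [Fintype Ω] (f : J → Ω → ℝ) :
    ∏ j, 𝔼 ω, f j ω = 𝔼 φ : J → Ω, ∏ j, f j (φ j) := by
  simp [Fintype.expect_eq_sum_div_card, Fintype.prod_sum, prod_div_distrib]

lemma expect_sq_expect {Ω Γ : Type*} [Fintype Ω] [Fintype Γ] (f : Ω → Γ → ℝ) :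
    𝔼 ω, (𝔼 γ, f ω γ) ^ 2 = 𝔼 γ, 𝔼 γ', 𝔼 ω, f ω γ * f ω γ' := by
  simp_rw [sq, Fintype.expect_mul_expect]
  rw [expect_comm]
  exact expect_congr rfl fun γ _ ↦ expect_comm ..

lemma expect_sub_one_sq {Ω : Type*} [Fintype Ω] {X : Ω → ℝ} (hX : 𝔼 ω, X ω = 1) :
    𝔼 ω, (X ω - 1) ^ 2 = 𝔼 ω, X ω ^ 2 - 1 := by
  have : Nonempty Ω := by
    by_contra hempty
    rw [not_nonempty_iff] at hempty
    simp at hX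
  simp_rw [sub_sq, one_pow, mul_one]
  rw [expect_add_distrib, expect_sub_distrib, ← mul_expect, hX, Fintype.expect_one]
  ring

lemma one_le_expect_sq {Ω : Type*} [Fintype Ω] {X : Ω → ℝ} (hX : 𝔼 ω, X ω = 1) :
    1 ≤ 𝔼 ω, X ω ^ 2 := by
  rw [← sub_nonneg, ← expect_sub_one_sq hX]
  exact expect_nonneg fun _ _ ↦ sq_nonneg _

/-- Chebyshev's inequality, for the deviation of `X` from its mean `1`. -/
lemma card_filter_eq_zero_le {Ω : Type*} [Fintype Ω] {X : Ω → ℝ} (hX : 𝔼 ω, X ω = 1) :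
    (#{ω | X ω = 0} : ℝ) ≤ Fintype.card Ω * (𝔼 ω, X ω ^ 2 - 1) := by
  calc (#{ω | X ω = 0} : ℝ) = ∑ ω with X ω = 0, (X ω - 1) ^ 2 := by
        rw [card_eq_sum_ones, Nat.cast_sum]
        exact sum_congr rfl fun ω hω ↦ by simp [(mem_filter.1 hω).2]
    _ ≤ ∑ ω, (X ω - 1) ^ 2 :=
        sum_le_sum_of_subset_of_nonneg (subset_univ _) fun _ _ _ ↦ sq_nonneg _
    _ = Fintype.card Ω * (𝔼 ω, X ω ^ 2 - 1) := by
        rw [← expect_sub_one_sq hX, Fintype.card_mul_expect]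

end Expectation

section Overlap

open Finset
open scoped BigOperators

lemma abs_one_sub_two_mul_div_le_one {z n : ℕ} (hz : z ≤ n) : |1 - 2 * (z : ℝ) / n| ≤ 1 := by
  have hratio : (z : ℝ) / n ≤ 1 := div_le_one_of_le₀ (by exact_mod_cast hz) (by positivity)
  have hnonneg : 0 ≤ (z : ℝ) / n := by positivity
  rw [abs_le, mul_div_assoc]
  constructor <;> linarith

variable {V : Type*} [Fintype V]

/-- The average of `±1` agreements of two assignments, `+1` where they agree and `-1` where they
differ. -/
noncomputable def overlap (σ τ : V → Bool) : ℝ :=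
  1 - 2 * hammingDist σ τ / Fintype.card V

lemma abs_overlap_le_one (σ τ : V → Bool) : |overlap σ τ| ≤ 1 :=
  abs_one_sub_two_mul_div_le_one hammingDist_le_card_fintype

lemma expect_comp_hammingDist [DecidableEq V] (σ : V → Bool) (f : ℕ → ℝ) :
    𝔼 τ, f (hammingDist σ τ) = ∑ z ∈ range (Fintype.card V + 1),
      ((Fintype.card V).choose z : ℝ) / 2 ^ Fintype.card V * f z := by
  have hsum : ∑ τ, f (hammingDist σ τ) = ∑ S : Finset V, f #S := by
    refine sum_nbij' (fun τ ↦ ({v | σ v ≠ τ v} : Finset V))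
      (fun S v ↦ if v ∈ S then !σ v else σ v) ?_ ?_ ?_ ?_ ?_
    · simp
    · simp
    · intro τ _
      ext v
      cases hσ : σ v <;> cases hτ : τ v <;> simp [hσ, hτ]
    · intro S _
      ext v
      simp
    · exact fun _ _ ↦ rfl
  rw [Fintype.expect_eq_sum_div_card, hsum, ← powerset_univ, sum_powerset_apply_card, card_univ,
    sum_div]
  refine sum_congr rfl fun z _ ↦ ?_
  rw [nsmul_eq_mul, Fintype.card_fun, Fintype.card_bool, Nat.cast_pow, Nat.cast_two]
  ring

end Overlap

section Fourier

open Finset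
open scoped BigOperators

variable {V ι : Type*}

/-- `-1` if the assignment satisfies the literal and `1` otherwise. -/
def literalSign (σ : V → Bool) (l : V × Bool) : ℝ :=
  if σ l.1 = l.2 then -1 else 1

variable [Fintype ι]

/-- The function of the literals of a clause (listed by `ι`) whose Fourier expansion in the signs of
the literals under `σ` has coefficients `a`. -/
def clauseWeight (a : Finset ι → ℝ) (σ : V → Bool) (c : ι → V × Bool) : ℝ :=
  ∑ S, a S * ∏ i ∈ S, literalSign σ (c i)

lemma clauseWeight_of_forall_ne (a : Finset ι → ℝ) {σ : V → Bool} {c : ι → V × Bool}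
    (hc : ∀ i, σ (c i).1 ≠ (c i).2) : clauseWeight a σ c = ∑ S, a S := by
  simp [clauseWeight, literalSign, hc]

variable [Fintype V]

lemma expect_literalSign (σ : V → Bool) : 𝔼 l, literalSign σ l = 0 := by
  rw [Fintype.expect_eq_sum_div_card, Fintype.sum_prod_type, sum_eq_zero, zero_div]
  intro v _
  cases hσ : σ v <;> simp [literalSign, hσ]

lemma expect_literalSign_mul [Nonempty V] (σ τ : V → Bool) :
    𝔼 l, literalSign σ l * literalSign τ l = overlap σ τ := by
  have hvar (v : V) : ∑ b, literalSign σ (v, b) * literalSign τ (v, b) =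
      2 - 4 * if σ v ≠ τ v then 1 else 0 := by
    cases hσ : σ v <;> cases hτ : τ v <;> norm_num [literalSign, hσ, hτ]
  have hsum : ∑ l, literalSign σ l * literalSign τ l =
      Fintype.card V * 2 - 4 * hammingDist σ τ := by
    rw [Fintype.sum_prod_type, sum_congr rfl fun v _ ↦ hvar v, sum_sub_distrib, ← mul_sum,
      sum_boole]
    simp [hammingDist]
  rw [Fintype.expect_eq_sum_div_card, hsum, overlap, Fintype.card_prod, Fintype.card_bool]
  push_cast
  field_simp
  ring

variable [Nonempty V] [DecidableEq ι]

lemma expect_prod_literalSign_mul (σ τ : V → Bool) (S T : Finset ι) :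
    𝔼 c : ι → V × Bool, (∏ i ∈ S, literalSign σ (c i)) * ∏ i ∈ T, literalSign τ (c i) =
      if S = T then overlap σ τ ^ #S else 0 := by
  let factor (i : ι) (l : V × Bool) : ℝ :=
    (if i ∈ S then literalSign σ l else 1) * if i ∈ T then literalSign τ l else 1
  have hfactor (c : ι → V × Bool) :
      (∏ i ∈ S, literalSign σ (c i)) * ∏ i ∈ T, literalSign τ (c i) = ∏ i, factor i (c i) := by
    simp only [factor, prod_mul_distrib, prod_ite_mem, univ_inter]
  simp_rw [hfactor]
  rw [← prod_expect]
  split_ifs with hST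
  · subst hST
    have hmean (i : ι) : 𝔼 l, factor i l = if i ∈ S then overlap σ τ else 1 := by
      by_cases hi : i ∈ S <;> simp [factor, hi, expect_literalSign_mul]
    simp [hmean, prod_ite_mem]
  · obtain ⟨i, hi⟩ : ∃ i, ¬(i ∈ S ↔ i ∈ T) := by
      simpa [Finset.ext_iff] using hST
    refine prod_eq_zero (mem_univ i) ?_
    by_cases hS : i ∈ S <;> by_cases hT : i ∈ T <;>
      simp_all [factor, expect_literalSign]

lemma expect_clauseWeight_mul (a b : Finset ι → ℝ) (σ τ : V → Bool) :
    𝔼 c, clauseWeight a σ c * clauseWeight b τ c = ∑ S, a S * b S * overlap σ τ ^ #S := by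
  simp_rw [clauseWeight, sum_mul_sum, mul_mul_mul_comm, expect_sum_comm, ← mul_expect,
    expect_prod_literalSign_mul]
  simp

lemma expect_clauseWeight (a : Finset ι → ℝ) (σ : V → Bool) :
    𝔼 c, clauseWeight a σ c = a ∅ := by
  have hone (c : ι → V × Bool) : clauseWeight (fun S ↦ if S = ∅ then 1 else 0) σ c = 1 := by
    simp [clauseWeight]
  simpa [hone] using expect_clauseWeight_mul a (fun S ↦ if S = ∅ then 1 else 0) σ σ

variable [DecidableEq V] {J : Type*} [Fintype J]

/-- The average over all assignments of the product of the weights of the clauses of `Φ`: a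
weighted count of the satisfying assignments when `clauseWeight a` vanishes on violated clauses. -/
noncomputable def formulaWeight (a : Finset ι → ℝ) (Φ : J → ι → V × Bool) : ℝ :=
  𝔼 σ : V → Bool, ∏ j, clauseWeight a σ (Φ j)

variable [DecidableEq J]

lemma expect_formulaWeight (a : Finset ι → ℝ) :
    𝔼 Φ : J → ι → V × Bool, formulaWeight a Φ = a ∅ ^ Fintype.card J := by
  simp_rw [formulaWeight]
  rw [expect_comm]
  simp_rw [← prod_expect fun (_ : J) ↦ clauseWeight a _, expect_clauseWeight]
  simp

lemma expect_formulaWeight_sq (a : Finset ι → ℝ) :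
    𝔼 Φ : J → ι → V × Bool, formulaWeight a Φ ^ 2 =
      𝔼 σ : V → Bool, 𝔼 τ : V → Bool, (∑ S, a S ^ 2 * overlap σ τ ^ #S) ^ Fintype.card J := by
  simp_rw [formulaWeight, expect_sq_expect, ← prod_mul_distrib]
  refine expect_congr rfl fun σ _ ↦ expect_congr rfl fun τ _ ↦ ?_
  rw [← prod_expect fun (_ : J) c ↦ clauseWeight a σ c * clauseWeight a τ c, prod_const, card_univ,
    expect_clauseWeight_mul]
  simp_rw [sq]

end Fourier

section SecondMoment

open Finset
open scoped BigOperators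

/-- Fourier coefficients for which violated clauses get weight `0`: `1` at the empty set and `-1`
shared equally by the large sets. Levels `1` and `2` are left out so that the second moment of the
weight at overlap `x` is `1 + O(x ^ 3)`. -/
noncomputable def highOrderCoeff (k : ℕ) (S : Finset (Fin k)) : ℝ :=
  (if S = ∅ then 1 else 0) - if S ∈ largeSubsets k then 1 / (#(largeSubsets k) : ℝ) else 0

variable {k : ℕ}

lemma highOrderCoeff_empty : highOrderCoeff k ∅ = 1 := by
  simp [highOrderCoeff, largeSubsets]

lemma sum_highOrderCoeff (hk : 3 ≤ k) : ∑ S, highOrderCoeff k S = 0 := by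
  have hpos := card_largeSubsets_pos hk
  simp [highOrderCoeff, hpos.ne']

lemma abs_sum_highOrderCoeff_sq_mul_pow_le {x : ℝ} (hx : |x| ≤ 1) :
    |∑ S, highOrderCoeff k S ^ 2 * x ^ #S| ≤ 1 + |x| ^ 3 / #(largeSubsets k) := by
  set N := (#(largeSubsets k) : ℝ)
  have hterm (S : Finset (Fin k)) : highOrderCoeff k S ^ 2 * x ^ #S =
      (if S = ∅ then 1 else 0) + if S ∈ largeSubsets k then x ^ #S / N ^ 2 else 0 := by
    rcases eq_or_ne S ∅ with rfl | hS
    · simp [highOrderCoeff, largeSubsets]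
    · by_cases hlarge : S ∈ largeSubsets k <;> simp [highOrderCoeff, hS, hlarge, N, div_eq_inv_mul]
  have hlarge : |∑ S ∈ largeSubsets k, x ^ #S / N ^ 2| ≤ |x| ^ 3 / N :=
    calc |∑ S ∈ largeSubsets k, x ^ #S / N ^ 2| ≤ ∑ S ∈ largeSubsets k, |x| ^ 3 / N ^ 2 := by
          refine (abs_sum_le_sum_abs ..).trans (sum_le_sum fun S hS ↦ ?_)
          rw [abs_div, abs_pow, abs_of_nonneg (sq_nonneg N)]
          gcongr ?_ / _
          exact pow_le_pow_of_le_one (abs_nonneg x) hx (mem_filter.1 hS).2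
      _ = |x| ^ 3 / N := by
          rw [sum_const, nsmul_eq_mul]
          change N * _ = _
          field_simp
  simp_rw [hterm, sum_add_distrib, sum_ite_eq' univ ∅, sum_ite_mem, univ_inter]
  rw [if_pos (mem_univ _)]
  exact (abs_add_le ..).trans (by rw [abs_one]; gcongr)

variable {V J : Type*} [Fintype V] [DecidableEq V] [Nonempty V] [Fintype J] [DecidableEq J]

lemma expect_formulaWeight_highOrderCoeff_sq_le :
    𝔼 Φ : J → Fin k → V × Bool, formulaWeight (highOrderCoeff k) Φ ^ 2 ≤
      ∑ z ∈ range (Fintype.card V + 1), ((Fintype.card V).choose z : ℝ) / 2 ^ Fintype.card V *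
        (1 + |1 - 2 * (z : ℝ) / Fintype.card V| ^ 3 / #(largeSubsets k)) ^ Fintype.card J := by
  rw [expect_formulaWeight_sq]
  refine expect_le univ_nonempty fun σ _ ↦ ?_
  rw [← expect_comp_hammingDist σ
    fun z ↦ (1 + |1 - 2 * (z : ℝ) / Fintype.card V| ^ 3 / #(largeSubsets k)) ^ Fintype.card J]
  refine expect_le_expect fun τ _ ↦ (le_abs_self _).trans ?_
  rw [abs_pow]
  gcongr
  exact abs_sum_highOrderCoeff_sq_mul_pow_le (abs_overlap_le_one σ τ)

end SecondMoment

section Laplace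

open Finset Filter Topology

lemma sum_choose_div_two_pow (n : ℕ) :
    ∑ z ∈ range (n + 1), (n.choose z : ℝ) / 2 ^ n = 1 := by
  rw [← sum_div, div_eq_one_iff_eq (by positivity)]
  exact_mod_cast Nat.sum_range_choose n

variable {f : ℝ → ℝ} {C δ t : ℝ}

lemma choose_div_two_pow_mul_exp_le (hC : 0 ≤ C) (hδ : 0 ≤ δ) (ht : 0 ≤ t)
    (hcube : ∀ x, 0 ≤ x → x ≤ 1 → f x ≤ C * x ^ 3)
    (hgap : ∀ x, 0 ≤ x → x ≤ 1 → f x ≤ entropyGap x - δ * x ^ 2) {n z : ℕ} (hz : z ≤ n) :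
    (n.choose z : ℝ) / 2 ^ n * Real.exp (n * f |1 - 2 * (z : ℝ) / n|) ≤
      (n.choose z : ℝ) / 2 ^ n * Real.exp (C * (n * t ^ 3)) + Real.exp (-(δ * (n * t ^ 2))) := by
  have hx' := abs_one_sub_two_mul_div_le_one hz
  have hchoose := choose_div_two_pow_le hz
  set x := |1 - 2 * (z : ℝ) / n|
  have hx : 0 ≤ x := abs_nonneg _
  rcases le_total x t with hxt | htx
  · calc (n.choose z : ℝ) / 2 ^ n * Real.exp (n * f x)
        ≤ (n.choose z : ℝ) / 2 ^ n * Real.exp (n * (C * t ^ 3)) := by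
          gcongr
          exact (hcube x hx hx').trans (by gcongr)
      _ ≤ _ := by
          rw [mul_left_comm]
          exact le_add_of_nonneg_right (Real.exp_pos _).le
  · calc (n.choose z : ℝ) / 2 ^ n * Real.exp (n * f x)
        ≤ Real.exp (-(n * entropyGap x)) * Real.exp (n * (entropyGap x - δ * t ^ 2)) := by
          gcongr
          exact (hgap x hx hx').trans (by gcongr)
      _ = Real.exp (-(δ * (n * t ^ 2))) := by
          rw [← Real.exp_add]
          ring_nf
      _ ≤ _ := le_add_of_nonneg_left (by positivity)

lemma sum_choose_div_two_pow_mul_exp_le (hC : 0 ≤ C) (hδ : 0 ≤ δ) (ht : 0 ≤ t)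
    (hcube : ∀ x, 0 ≤ x → x ≤ 1 → f x ≤ C * x ^ 3)
    (hgap : ∀ x, 0 ≤ x → x ≤ 1 → f x ≤ entropyGap x - δ * x ^ 2) (n : ℕ) :
    ∑ z ∈ range (n + 1), (n.choose z : ℝ) / 2 ^ n * Real.exp (n * f |1 - 2 * (z : ℝ) / n|) ≤
      Real.exp (C * (n * t ^ 3)) + (n + 1) * Real.exp (-(δ * (n * t ^ 2))) := by
  refine (sum_le_sum fun z hz ↦ choose_div_two_pow_mul_exp_le hC hδ ht hcube hgap
    (mem_range_succ_iff.1 hz)).trans_eq ?_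
  rw [sum_add_distrib, ← sum_mul, sum_choose_div_two_pow, one_mul, sum_const, card_range,
    nsmul_eq_mul, Nat.cast_succ]

lemma tendsto_exp_div_add_pow_mul_exp_neg (C : ℝ) (hδ : 0 < δ) (d : ℕ) :
    Tendsto (fun s : ℝ ↦ Real.exp (C / s) + (s ^ d + 1) * Real.exp (-(δ * s))) atTop (𝓝 1) := by
  have hcenter : Tendsto (fun s : ℝ ↦ Real.exp (C / s)) atTop (𝓝 1) := by
    simpa using (tendsto_const_nhds.div_atTop tendsto_id : Tendsto (C / ·) atTop (𝓝 0)).rexp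
  have hpow (e : ℕ) : Tendsto (fun s : ℝ ↦ s ^ e * Real.exp (-(δ * s))) atTop (𝓝 0) := by
    simpa using tendsto_rpow_mul_exp_neg_mul_atTop_nhds_zero e δ hδ
  simpa [add_mul] using hcenter.add ((hpow d).add (hpow 0))

lemma one_add_pow_le_exp_mul_log {y r : ℝ} (hy : 0 ≤ y) {n m : ℕ} (hm : (m : ℝ) ≤ r * n) :
    (1 + y) ^ m ≤ Real.exp (n * (r * Real.log (1 + y))) := by
  rw [pow_eq_exp_mul_log (by positivity) m, ← mul_assoc, mul_comm (n : ℝ)]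
  gcongr
  exact Real.log_nonneg (le_add_of_nonneg_right hy)

lemma sum_choose_mul_one_add_cube_pow_le {k : ℕ} (hk : 3 ≤ k) {r : ℝ} (hr0 : 0 ≤ r)
    (hr : r ≤ 2 ^ (k - 1) * Real.log 2 - 2) {n m : ℕ} (hm : (m : ℝ) ≤ r * n)
    {s : ℝ} (hs : 0 < s) (hsn : s ^ 5 = n) :
    ∑ z ∈ range (n + 1),
        (n.choose z : ℝ) / 2 ^ n * (1 + |1 - 2 * (z : ℝ) / n| ^ 3 / #(largeSubsets k)) ^ m ≤
      Real.exp (r / s) + (s ^ 5 + 1) * Real.exp (-(1 / 1000 * s)) := by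
  have hN : (1 : ℝ) ≤ #(largeSubsets k) := Nat.one_le_cast.2 (card_largeSubsets_pos hk)
  have hgap (x : ℝ) (hx : 0 ≤ x) (hx' : x ≤ 1) :
      r * Real.log (1 + x ^ 3 / #(largeSubsets k)) ≤ entropyGap x - 1 / 1000 * x ^ 2 :=
    (mul_log_one_add_cube_div_le_entropyGap hk hr0 hr hx hx').trans_eq (by ring)
  generalize (#(largeSubsets k) : ℝ) = N at hN hgap ⊢
  have hcube (x : ℝ) (hx : 0 ≤ x) (_ : x ≤ 1) : r * Real.log (1 + x ^ 3 / N) ≤ r * x ^ 3 := by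
    have hlog := Real.log_le_sub_one_of_pos (by positivity : 0 < 1 + x ^ 3 / N)
    have hdiv : x ^ 3 / N ≤ x ^ 3 := div_le_self (by positivity) hN
    gcongr
    linarith
  calc ∑ z ∈ range (n + 1), (n.choose z : ℝ) / 2 ^ n * (1 + |1 - 2 * (z : ℝ) / n| ^ 3 / N) ^ m
      ≤ ∑ z ∈ range (n + 1), (n.choose z : ℝ) / 2 ^ n *
          Real.exp (n * (r * Real.log (1 + |1 - 2 * (z : ℝ) / n| ^ 3 / N))) := by
        gcongr with z
        exact one_add_pow_le_exp_mul_log (by positivity) hm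
    -- The cut-off `s⁻² = n ^ (-2 / 5)` makes `n t ^ 3` vanish while `n t ^ 2` still diverges.
    _ ≤ Real.exp (r * (n * (1 / s ^ 2) ^ 3)) +
          (n + 1) * Real.exp (-(1 / 1000 * (n * (1 / s ^ 2) ^ 2))) :=
        sum_choose_div_two_pow_mul_exp_le hr0 (by norm_num) (by positivity) hcube hgap n
    _ = Real.exp (r / s) + (s ^ 5 + 1) * Real.exp (-(1 / 1000 * s)) := by
        rw [← hsn]
        congr 3 <;> field_simp

end Laplace

section Counting

open Finset
open scoped Nat

lemma card_filter_image_univ_eq {ι α : Type*} [Fintype ι] [DecidableEq ι] [Fintype α]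
    [DecidableEq α] {S : Finset α} (hS : #S = Fintype.card ι) :
    #{f : ι → α | univ.image f = S} = (Fintype.card ι)! := by
  have e : ι ≃ S := Fintype.equivOfCardEq (by simp [hS])
  rw [← Fintype.card_equiv e, ← card_univ]
  symm
  refine card_nbij (fun e i ↦ (e i : α)) (fun e _ ↦ ?_) ?_ fun f hf ↦ ?_
  · rw [mem_coe, mem_filter_univ]
    ext a
    simp only [mem_image, mem_univ, true_and]
    exact ⟨fun ⟨i, hi⟩ ↦ hi ▸ (e i).2, fun ha ↦ ⟨e.symm ⟨a, ha⟩, by simp⟩⟩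
  · exact fun e _ e' _ h ↦ Equiv.ext fun i ↦ Subtype.ext (congrFun h i)
  · rw [mem_coe, mem_filter_univ] at hf
    have hmem (i : ι) : f i ∈ S := hf ▸ mem_image_of_mem f (mem_univ i)
    have hbij : Function.Bijective fun i ↦ (⟨f i, hmem i⟩ : S) := by
      rw [Fintype.bijective_iff_surjective_and_card]
      refine ⟨fun ⟨a, ha⟩ ↦ ?_, by simp [hS]⟩
      obtain ⟨i, -, hi⟩ := mem_image.1 (hf.symm ▸ ha)
      exact ⟨i, Subtype.ext hi⟩
    exact ⟨Equiv.ofBijective _ hbij, mem_univ _, rfl⟩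

variable {J ι α : Type*} [Fintype J] [Fintype ι] [DecidableEq α]

/-- The set of clauses listed, possibly with repetitions of clauses and of literals, by `Φ`. -/
def toFormula (Φ : J → ι → α) : Finset (Finset α) :=
  univ.image fun j ↦ univ.image (Φ j)

lemma card_filter_toFormula_eq [DecidableEq J] [DecidableEq ι] [Fintype α] {F : Finset (Finset α)}
    (hF : #F = Fintype.card J) (hclause : ∀ C ∈ F, #C = Fintype.card ι) :
    #{Φ : J → ι → α | toFormula Φ = F} =
      (Fintype.card J)! * (Fintype.card ι)! ^ Fintype.card J := by
  let clauses (Φ : J → ι → α) (j : J) : Finset α := univ.image (Φ j)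
  have hfibre (g : J → Finset α) (hg : univ.image g = F) :
      #{Φ ∈ ({Φ : J → ι → α | toFormula Φ = F} : Finset _) | clauses Φ = g} =
        (Fintype.card ι)! ^ Fintype.card J := by
    have hpi : ({Φ ∈ ({Φ : J → ι → α | toFormula Φ = F} : Finset _) | clauses Φ = g}) =
        Fintype.piFinset fun j ↦ {c : ι → α | univ.image c = g j} := by
      ext Φ
      simp only [mem_filter_univ, filter_filter, Fintype.mem_piFinset]
      exact ⟨fun h ↦ congrFun h.2,
        fun h ↦ ⟨(congrArg (univ.image ·) (funext h)).trans hg, funext h⟩⟩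
    have hcard (j : J) : #{c : ι → α | univ.image c = g j} = (Fintype.card ι)! :=
      card_filter_image_univ_eq (hclause _ (hg ▸ mem_image_of_mem g (mem_univ j)))
    rw [hpi, Fintype.card_piFinset, prod_congr rfl fun j _ ↦ hcard j, prod_const, card_univ]
  have hmaps (Φ : J → ι → α) (hΦ : Φ ∈ ({Φ | toFormula Φ = F} : Finset _)) :
      clauses Φ ∈ ({g | univ.image g = F} : Finset (J → Finset α)) :=
    (mem_filter_univ _).2 ((mem_filter_univ Φ).1 hΦ)
  rw [card_eq_sum_card_fiberwise hmaps,
    sum_congr rfl fun g hg ↦ hfibre g ((mem_filter_univ g).1 hg), sum_const, smul_eq_mul,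
    card_filter_image_univ_eq hF]

lemma formulaWeight_eq_zero_of_not_isSatisfiable {n : ℕ} {a : Finset ι → ℝ} (ha : ∑ S, a S = 0)
    {Φ : J → ι → Fin n × Bool} (hΦ : ¬ IsSatisfiable (toFormula Φ)) : formulaWeight a Φ = 0 := by
  refine expect_eq_zero fun σ _ ↦ ?_
  obtain ⟨j, hj⟩ : ∃ j, ¬ SatisfiesClause σ (univ.image (Φ j)) := by
    by_contra! hσ
    exact hΦ ⟨σ, by simpa [toFormula] using hσ⟩
  refine prod_eq_zero (mem_univ j) ?_
  rw [clauseWeight_of_forall_ne a fun i hi ↦ hj ⟨Φ j i, mem_image_of_mem _ (mem_univ i), hi⟩, ha]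

/-- The finset of proper `k`-clauses on `n` variables. -/
def properClauses (n k : ℕ) : Finset (Finset (Fin n × Bool)) :=
  {C | #C = k ∧ #(C.image Prod.fst) = k}

lemma mem_properClauses {n k : ℕ} {C : Finset (Fin n × Bool)} :
    C ∈ properClauses n k ↔ IsProperClause n k C :=
  mem_filter_univ C

lemma card_properClauses (n k : ℕ) : #(properClauses n k) = 2 ^ k * n.choose k := by
  let pairs : Finset (Σ _ : Finset (Fin n), Finset (Fin n)) :=
    (powersetCard k univ).sigma fun S ↦ S.powerset
  have hpairs : #pairs = 2 ^ k * n.choose k := by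
    rw [card_sigma, sum_congr rfl fun S hS ↦ by rw [card_powerset, (mem_powersetCard.1 hS).2]]
    simp [mul_comm]
  rw [← hpairs]
  -- A clause amounts to its set of variables together with the subset of positive ones.
  refine card_nbij' (fun C ↦ ⟨C.image Prod.fst, ({v | (v, true) ∈ C} : Finset (Fin n))⟩)
    (fun p ↦ p.1.image fun v ↦ (v, decide (v ∈ p.2))) ?_ ?_ ?_ ?_
  · intro C hC
    have hC' := (mem_filter_univ C).1 hC
    simp only [pairs, coe_sigma, Set.mem_sigma_iff, mem_coe, mem_powersetCard_univ, mem_powerset]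
    exact ⟨hC'.2, fun v hv ↦ mem_image.2 ⟨_, (mem_filter_univ v).1 hv, rfl⟩⟩
  · rintro ⟨S, T⟩ hST
    simp only [pairs, coe_sigma, Set.mem_sigma_iff, mem_coe, mem_powersetCard_univ] at hST
    have hinj : Function.Injective fun v ↦ (v, decide (v ∈ T)) := fun v w h ↦ congrArg Prod.fst h
    simp [properClauses, card_image_of_injective _ hinj, image_image, Function.comp_def, hST.1]
  · intro C hC
    have hC' := (mem_filter_univ C).1 hC
    have hinj : Set.InjOn Prod.fst (C : Set (Fin n × Bool)) :=
      card_image_iff.1 (hC'.2.trans hC'.1.symm)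
    have hsign : ∀ l ∈ C, (l.1, decide ((l.1, true) ∈ C)) = l := by
      rintro ⟨v, _ | _⟩ hl
      · have htrue : (v, true) ∉ C := fun h ↦ by simpa using hinj h hl rfl
        simp [htrue]
      · simp [hl]
    simpa [image_image, Function.comp_def] using image_congr hsign
  · rintro ⟨S, T⟩ hST
    simp only [pairs, coe_sigma, Set.mem_sigma_iff, mem_coe, mem_powerset] at hST
    have hT : ({v | v ∈ S ∧ v ∈ T} : Finset _) = T := by grind
    simp [image_image, Function.comp_def, hT]

open scoped Classical in
/-- The unsatisfiable formulas with `m` proper `k`-clauses on `n` variables. -/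
noncomputable def unsatFormulas (n k m : ℕ) : Finset (Finset (Finset (Fin n × Bool))) :=
  {F ∈ powersetCard m (properClauses n k) | ¬ IsSatisfiable F}

lemma card_isSatisfiable_add_card_unsatFormulas (n k m : ℕ) :
    Nat.card {F : Finset (Finset (Fin n × Bool)) //
        F.card = m ∧ (∀ C ∈ F, IsProperClause n k C) ∧ IsSatisfiable F} +
      #(unsatFormulas n k m) = (2 ^ k * n.choose k).choose m := by
  classical
  rw [← card_properClauses, ← card_powersetCard,
    ← card_filter_add_card_filter_not (s := powersetCard m (properClauses n k)) IsSatisfiable,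
    unsatFormulas]
  congr 1
  refine Nat.subtype_card _ fun F ↦ ?_
  simp only [mem_filter, mem_powersetCard, subset_iff, mem_properClauses]
  tauto

lemma card_unsatFormulas_mul_le_card {n k m : ℕ} {a : Finset (Fin k) → ℝ} (ha : ∑ S, a S = 0) :
    #(unsatFormulas n k m) * (m ! * k ! ^ m) ≤
      #{Φ : Fin m → Fin k → Fin n × Bool | formulaWeight a Φ = 0} := by
  classical
  have hfibre (F : Finset (Finset (Fin n × Bool))) (hF : F ∈ unsatFormulas n k m) :
      m ! * k ! ^ m =
        #{Φ ∈ ({Φ : Fin m → Fin k → Fin n × Bool | formulaWeight a Φ = 0} : Finset _) |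
          toFormula Φ = F} := by
    obtain ⟨hmem, hunsat⟩ := mem_filter.1 hF
    obtain ⟨hproper, hcard⟩ := mem_powersetCard.1 hmem
    have hall := card_filter_toFormula_eq (J := Fin m) (ι := Fin k) (F := F) (by simp [hcard])
      fun C hC ↦ by simp [(mem_properClauses.1 (hproper hC)).1]
    rw [Fintype.card_fin, Fintype.card_fin] at hall
    rw [← hall, filter_filter]
    congr 1
    refine filter_congr fun Φ _ ↦ ⟨fun h ↦ ⟨?_, h⟩, And.right⟩
    exact formulaWeight_eq_zero_of_not_isSatisfiable ha (h ▸ hunsat)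
  rw [← smul_eq_mul, ← sum_const, sum_congr rfl hfibre]
  exact (sum_card_fiberwise_eq_card_filter ..).trans_le (card_filter_le ..)

end Counting

section LikelihoodRatio

open scoped Nat

lemma pow_mul_one_sub_le_factorial_mul_choose {n k : ℕ} (hk : k ≤ n) :
    (n : ℝ) ^ k * (1 - k ^ 2 / n) ≤ k ! * n.choose k := by
  rcases Nat.eq_zero_or_pos n with rfl | hn
  · simp [Nat.le_zero.1 hk]
  have hn' : (0 : ℝ) < n := by exact_mod_cast hn
  have hratio : (k : ℝ) / n ≤ 1 := div_le_one_of_le₀ (by exact_mod_cast hk) hn'.le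
  have hbernoulli : 1 - (k : ℝ) ^ 2 / n ≤ (1 - k / n) ^ k := by
    refine le_of_eq_of_le ?_ (one_add_mul_le_pow (a := -((k : ℝ) / n)) (by linarith) k)
    ring
  have hdesc : (n - k) ^ k ≤ n.descFactorial k :=
    (Nat.pow_le_pow_left (by lia) k).trans (Nat.pow_sub_le_descFactorial n k)
  calc (n : ℝ) ^ k * (1 - k ^ 2 / n) ≤ n ^ k * (1 - k / n) ^ k := by gcongr
    _ = ((n - k : ℕ) : ℝ) ^ k := by
        rw [← mul_pow, mul_sub, mul_one, mul_div_cancel₀ _ hn'.ne', Nat.cast_sub hk]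
    _ ≤ k ! * n.choose k := by
        rw [Nat.descFactorial_eq_factorial_mul_choose] at hdesc
        exact_mod_cast hdesc

variable {k n m : ℕ} {r : ℝ}

lemma two_mul_pow_mul_one_sub_le (hk : k ≤ n) :
    (2 * n : ℝ) ^ k * (1 - k ^ 2 / n) ≤ (2 ^ k * n.choose k : ℕ) * k ! := by
  calc (2 * n : ℝ) ^ k * (1 - k ^ 2 / n) = 2 ^ k * (n ^ k * (1 - k ^ 2 / n)) := by ring
    _ ≤ (2 : ℝ) ^ k * (k ! * n.choose k) :=
        mul_le_mul_of_nonneg_left (pow_mul_one_sub_le_factorial_mul_choose hk) (by positivity)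
    _ = ((2 ^ k * n.choose k : ℕ) : ℝ) * k ! := by
        push_cast
        ring

lemma sq_div_le_half (hkn : 2 * k ^ 2 ≤ n) : (k : ℝ) ^ 2 / n ≤ 1 / 2 := by
  have hkn' : (2 : ℝ) * k ^ 2 ≤ n := by exact_mod_cast hkn
  refine div_le_of_le_mul₀ (by positivity) (by norm_num) ?_
  linarith

lemma exp_mul_two_mul_pow_pow_le (hkn : 2 * k ^ 2 ≤ n) (hn : 0 < n) (hm : (m : ℝ) ≤ r * n) :
    Real.exp (-(2 * k ^ 2 * r)) * ((2 * n : ℝ) ^ k) ^ m ≤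
      ((2 ^ k * n.choose k : ℕ) * k ! : ℝ) ^ m := by
  have hhalf := sq_div_le_half hkn
  have hexp : Real.exp (-(2 * k ^ 2 * r)) ≤ (1 - (k : ℝ) ^ 2 / n) ^ m :=
    calc Real.exp (-(2 * k ^ 2 * r)) ≤ Real.exp (m * -(2 * (k ^ 2 / n))) := by
          have hscale : (m : ℝ) * (2 * (k ^ 2 / n)) ≤ r * n * (2 * (k ^ 2 / n)) := by gcongr
          have hcancel : r * n * (2 * (k ^ 2 / n)) = 2 * k ^ 2 * r := by field_simp
          gcongr
          linarith
      _ = Real.exp (-(2 * (k ^ 2 / n))) ^ m := Real.exp_nat_mul _ _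
      _ ≤ (1 - (k : ℝ) ^ 2 / n) ^ m := by
          gcongr
          exact exp_neg_two_mul_le_one_sub (by positivity) hhalf
  calc Real.exp (-(2 * k ^ 2 * r)) * ((2 * n : ℝ) ^ k) ^ m
      ≤ (1 - (k : ℝ) ^ 2 / n) ^ m * ((2 * n : ℝ) ^ k) ^ m := by gcongr
    _ = ((2 * n : ℝ) ^ k * (1 - k ^ 2 / n)) ^ m := by rw [← mul_pow, mul_comm]
    _ ≤ ((2 ^ k * n.choose k : ℕ) * k ! : ℝ) ^ m :=
        pow_le_pow_left₀ (mul_nonneg (by positivity) (by linarith))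
          (two_mul_pow_mul_one_sub_le (by nlinarith)) m

lemma two_mul_sq_le_two_pow_mul_choose (hk : 3 ≤ k) (hkn : 2 * k ^ 2 ≤ n) (hrn : k ! * r ^ 2 ≤ n)
    (hm : (m : ℝ) ≤ r * n) : 2 * m ^ 2 ≤ 2 ^ k * n.choose k := by
  have hn : (1 : ℝ) ≤ n := by exact_mod_cast (by nlinarith : 1 ≤ n)
  have hhalf := sq_div_le_half hkn
  have hchoose : (2 * n : ℝ) ^ k / 2 ≤ (2 ^ k * n.choose k : ℕ) * k ! := by
    refine le_trans ?_ (two_mul_pow_mul_one_sub_le (by nlinarith))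
    rw [div_eq_mul_inv]
    gcongr
    linarith
  have hcube : (2 * n : ℝ) ^ 3 ≤ (2 * n) ^ k := pow_le_pow_right₀ (by linarith) hk
  have hbound : (2 * m ^ 2 : ℝ) * k ! ≤ (2 ^ k * n.choose k : ℕ) * k ! :=
    calc (2 * m ^ 2 : ℝ) * k ! ≤ 2 * (r * n) ^ 2 * k ! := by gcongr
      _ = 2 * n ^ 2 * (k ! * r ^ 2) := by ring
      _ ≤ 2 * n ^ 2 * n := by gcongr
      _ ≤ (2 * n) ^ 3 / 2 := by nlinarith [pow_pos (by linarith : (0 : ℝ) < n) 3]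
      _ ≤ (2 ^ k * n.choose k : ℕ) * k ! := by linarith
  exact_mod_cast le_of_mul_le_mul_right hbound (by positivity)

lemma half_mul_pow_le_choose_mul_factorial {P m : ℕ} (hP : 2 * m ^ 2 ≤ P) :
    1 / 2 * (P : ℝ) ^ m ≤ P.choose m * m ! := by
  calc 1 / 2 * (P : ℝ) ^ m ≤ P ^ m * (1 - m ^ 2 / P) := by
        rw [mul_comm]
        gcongr
        linarith [sq_div_le_half hP]
    _ ≤ P.choose m * m ! := by
        rw [mul_comm (P.choose m : ℝ)]
        exact pow_mul_one_sub_le_factorial_mul_choose (by nlinarith)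

lemma exp_div_two_mul_le_choose_mul_factorial (hk : 3 ≤ k) (hkn : 2 * k ^ 2 ≤ n)
    (hrn : k ! * r ^ 2 ≤ n) (hm : (m : ℝ) ≤ r * n) :
    Real.exp (-(2 * k ^ 2 * r)) / 2 * ((2 * n : ℝ) ^ k) ^ m ≤
      (2 ^ k * n.choose k).choose m * (m ! * k ! ^ m) := by
  set P := 2 ^ k * n.choose k
  calc Real.exp (-(2 * k ^ 2 * r)) / 2 * ((2 * n : ℝ) ^ k) ^ m
      = 1 / 2 * (Real.exp (-(2 * k ^ 2 * r)) * ((2 * n : ℝ) ^ k) ^ m) := by ring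
    _ ≤ 1 / 2 * (P * k ! : ℝ) ^ m := by
        gcongr
        exact exp_mul_two_mul_pow_pow_le hkn (by nlinarith) hm
    _ = 1 / 2 * P ^ m * k ! ^ m := by ring
    _ ≤ P.choose m * m ! * k ! ^ m := by
        gcongr ?_ * _
        exact half_mul_pow_le_choose_mul_factorial
          (two_mul_sq_le_two_pow_mul_choose hk hkn hrn hm)
    _ = P.choose m * (m ! * k ! ^ m) := mul_assoc ..

end LikelihoodRatio

section Limit

open Filter Finset Topology
open scoped BigOperators Nat

variable {k : ℕ} {r : ℝ}

lemma expect_formulaWeight_highOrderCoeff {V J : Type*} [Fintype V] [DecidableEq V] [Nonempty V]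
    [Fintype J] [DecidableEq J] :
    𝔼 Φ : J → Fin k → V × Bool, formulaWeight (highOrderCoeff k) Φ = 1 := by
  rw [expect_formulaWeight, highOrderCoeff_empty, one_pow]

lemma tendsto_expect_formulaWeight_sq (hk : 3 ≤ k) (hr0 : 0 ≤ r)
    (hr : r ≤ 2 ^ (k - 1) * Real.log 2 - 2) :
    Tendsto (fun n : ℕ ↦ 𝔼 Φ : Fin ⌊r * n⌋₊ → Fin k → Fin n × Bool,
      formulaWeight (highOrderCoeff k) Φ ^ 2) atTop (𝓝 1) := by
  have hroot : Tendsto (fun n : ℕ ↦ (n : ℝ) ^ (1 / 5 : ℝ)) atTop atTop :=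
    (tendsto_rpow_atTop (by norm_num)).comp tendsto_natCast_atTop_atTop
  have hbound := (tendsto_exp_div_add_pow_mul_exp_neg r (by norm_num : (0 : ℝ) < 1 / 1000) 5).comp
    hroot
  refine tendsto_of_tendsto_of_tendsto_of_le_of_le' tendsto_const_nhds hbound ?_ ?_
  all_goals
    filter_upwards [eventually_gt_atTop 0] with n hn
    have : NeZero n := ⟨hn.ne'⟩
  · exact one_le_expect_sq expect_formulaWeight_highOrderCoeff
  · refine expect_formulaWeight_highOrderCoeff_sq_le.trans ?_
    have hroot5 : ((n : ℝ) ^ (1 / 5 : ℝ)) ^ 5 = n := by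
      rw [← Real.rpow_mul_natCast n.cast_nonneg]
      norm_num
    simpa only [Fintype.card_fin, Function.comp_apply] using
      sum_choose_mul_one_add_cube_pow_le hk hr0 hr (Nat.floor_le (by positivity)) (by positivity)
        hroot5

lemma card_unsatFormulas_mul_le (hk : 3 ≤ k) {n : ℕ} (hn : 0 < n) (m : ℕ) :
    (#(unsatFormulas n k m) * (m ! * k ! ^ m) : ℝ) ≤ ((2 * n : ℝ) ^ k) ^ m *
      (𝔼 Φ : Fin m → Fin k → Fin n × Bool, formulaWeight (highOrderCoeff k) Φ ^ 2 - 1) := by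
  have : NeZero n := ⟨hn.ne'⟩
  have hcard : (Fintype.card (Fin m → Fin k → Fin n × Bool) : ℝ) = ((2 * n : ℝ) ^ k) ^ m := by
    simp [mul_comm]
  rw [← hcard]
  refine le_trans ?_ (card_filter_eq_zero_le expect_formulaWeight_highOrderCoeff)
  exact_mod_cast card_unsatFormulas_mul_le_card (sum_highOrderCoeff hk)

lemma eventually_two_mul_sq_le_and_factorial_mul_sq_le (k : ℕ) (r : ℝ) :
    ∀ᶠ n : ℕ in atTop, 2 * k ^ 2 ≤ n ∧ k ! * r ^ 2 ≤ n :=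
  (eventually_ge_atTop _).and (tendsto_natCast_atTop_atTop.eventually_ge_atTop _)

lemma eventually_choose_floor_pos (hk : 3 ≤ k) (hr0 : 0 ≤ r) :
    ∀ᶠ n : ℕ in atTop, 0 < (2 ^ k * n.choose k).choose ⌊r * n⌋₊ := by
  filter_upwards [eventually_two_mul_sq_le_and_factorial_mul_sq_le k r] with n ⟨hkn, hrn⟩
  have hsq := two_mul_sq_le_two_pow_mul_choose hk hkn hrn (Nat.floor_le (by positivity))
  exact Nat.choose_pos (by nlinarith)

lemma tendsto_card_unsatFormulas_div (hk : 3 ≤ k) (hr0 : 0 ≤ r)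
    (hr : r ≤ 2 ^ (k - 1) * Real.log 2 - 2) :
    Tendsto (fun n : ℕ ↦ (#(unsatFormulas n k ⌊r * n⌋₊) : ℝ) /
      (2 ^ k * n.choose k).choose ⌊r * n⌋₊) atTop (𝓝 0) := by
  set c := Real.exp (-(2 * k ^ 2 * r)) / 2
  have hc : 0 < c := by positivity
  have hlim : Tendsto (fun n : ℕ ↦ (𝔼 Φ : Fin ⌊r * n⌋₊ → Fin k → Fin n × Bool,
      formulaWeight (highOrderCoeff k) Φ ^ 2 - 1) / c) atTop (𝓝 0) := by
    simpa using ((tendsto_expect_formulaWeight_sq hk hr0 hr).sub_const 1).div_const c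
  refine squeeze_zero' (.of_forall fun n ↦ by positivity) ?_ hlim
  filter_upwards [eventually_gt_atTop 0, eventually_choose_floor_pos hk hr0,
    eventually_two_mul_sq_le_and_factorial_mul_sq_le k r] with n hn hchoose ⟨hkn, hrn⟩
  set m := ⌊r * n⌋₊
  set W := ((2 ^ k * n.choose k).choose m : ℝ)
  set M := ((2 * n : ℝ) ^ k) ^ m
  set K := (m ! * k ! ^ m : ℝ)
  set v : ℝ := 𝔼 Φ : Fin m → Fin k → Fin n × Bool, formulaWeight (highOrderCoeff k) Φ ^ 2 - 1
  have hunsat : #(unsatFormulas n k m) * K ≤ M * v := card_unsatFormulas_mul_le hk hn m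
  have htotal : c * M ≤ W * K :=
    exp_div_two_mul_le_choose_mul_factorial hk hkn hrn (Nat.floor_le (by positivity))
  have hv : 0 ≤ v :=
    have : NeZero n := ⟨hn.ne'⟩
    sub_nonneg.2 (one_le_expect_sq expect_formulaWeight_highOrderCoeff)
  rw [div_le_div_iff₀ (Nat.cast_pos.2 hchoose) hc]
  refine le_of_mul_le_mul_right ?_ (by positivity : 0 < K)
  calc #(unsatFormulas n k m) * c * K = c * (#(unsatFormulas n k m) * K) := by ring
    _ ≤ c * (M * v) := by gcongr
    _ = c * M * v := by ring
    _ ≤ W * K * v := by gcongr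
    _ = v * W * K := by ring

end Limit

/-- For all `k ≥ 3` and `0 < r ≤ 2^(k-1) ln 2 - 2`, the probability that a uniformly
random `k`-CNF formula with `⌊rn⌋` clauses is satisfiable tends to `1` as `n → ∞`. -/
theorem ksat_satisfiable_whp (k : ℕ) (hk : 3 ≤ k) (r : ℝ) (hr0 : 0 < r)
    (hr : r ≤ 2 ^ (k - 1) * Real.log 2 - 2) :
    Filter.Tendsto
      (fun n : ℕ =>
        (Nat.card {F : Finset (Finset (Fin n × Bool)) //
            F.card = ⌊r * (n : ℝ)⌋₊ ∧ (∀ C ∈ F, IsProperClause n k C) ∧ IsSatisfiable F} : ℝ) /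
          (Nat.choose (2 ^ k * Nat.choose n k) ⌊r * (n : ℝ)⌋₊ : ℝ))
      Filter.atTop (nhds 1) := by
  have hsat := (tendsto_card_unsatFormulas_div hk hr0.le hr).const_sub 1
  rw [sub_zero] at hsat
  refine hsat.congr' ?_
  filter_upwards [eventually_choose_floor_pos hk hr0.le] with n hchoose
  have htotal := card_isSatisfiable_add_card_unsatFormulas n k ⌊r * n⌋₊
  have hchoose' : ((2 ^ k * n.choose k).choose ⌊r * n⌋₊ : ℝ) ≠ 0 := by exact_mod_cast hchoose.ne'
  rw [eq_div_iff hchoose', sub_mul, one_mul, div_mul_cancel₀ _ hchoose', sub_eq_iff_eq_add]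
  exact_mod_cast htotal.symm
end

section
/- For every integer k ≥ 3 and every real c > 2^(k-1)·ln 2 − (ln 2)/2, the probability that a random k-uniform hypergraph H_k(n, m) with m = ⌊cn⌋ hyperedges is 2-colorable tends to 0 as n → ∞; that is, the ratio (number of 2-colorable m-element subsets of the k-element subsets of an n-vertex set) / C(C(n,k), m) tends to 0 as n → ∞. -/
/-- A hypergraph (a set of hyperedges on vertex set `Fin n`) is 2-colorable if the
vertices can be 2-colored so that no hyperedge is monochromatic. -/
def IsTwoColorable {n : ℕ} (H : Finset (Finset (Fin n))) : Prop :=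
  ∃ σ : Fin n → Bool, ∀ e ∈ H, (∃ v ∈ e, σ v = true) ∧ (∃ v ∈ e, σ v = false)

/-!
This is a first moment argument. If the color classes of `σ : Fin n → Bool` have sizes `a` and `b`,
then `C(a, k) + C(b, k)` of the `k`-sets are monochromatic, and by convexity this is at least
`(2^(1-k) - o(1)) C(n, k)`, uniformly in `σ`. A union bound over the `2 ^ n` colorings therefore
bounds the probability of 2-colorability by `2 ^ n * q ^ m` for any fixed `q > 1 - x`, where
`x = 2^(1-k)`. As `-log (1 - x) ≥ 2x / (2 - x)`, we have `2 (1 - x) ^ c < 1` as soon as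
`c > log 2 (1 / x - 1 / 2)`, and by continuity `2 q ^ c < 1` still holds for some `q > 1 - x`.
-/

open Filter Finset
open scoped Topology

section Binomial

lemma descFactorial_mul_pow_le_descFactorial_mul_pow {a N : ℕ} (haN : a ≤ N) (m : ℕ) :
    a.descFactorial m * N ^ m ≤ N.descFactorial m * a ^ m := by
  induction m with
  | zero => simp
  | succ m ih =>
    have factor_le : (a - m) * N ≤ (N - m) * a := by
      rw [Nat.sub_mul, Nat.sub_mul, mul_comm N a]
      exact Nat.sub_le_sub_left (Nat.mul_le_mul_left m haN) _
    calc a.descFactorial (m + 1) * N ^ (m + 1)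
        = ((a - m) * N) * (a.descFactorial m * N ^ m) := by rw [Nat.descFactorial_succ]; ring
      _ ≤ ((N - m) * a) * (N.descFactorial m * a ^ m) := Nat.mul_le_mul factor_le ih
      _ = N.descFactorial (m + 1) * a ^ (m + 1) := by rw [Nat.descFactorial_succ]; ring

lemma choose_mul_pow_le_choose_mul_pow {a N : ℕ} (haN : a ≤ N) (m : ℕ) :
    a.choose m * N ^ m ≤ N.choose m * a ^ m := by
  have h := descFactorial_mul_pow_le_descFactorial_mul_pow haN m
  rw [Nat.descFactorial_eq_factorial_mul_choose, Nat.descFactorial_eq_factorial_mul_choose,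
    mul_assoc, mul_assoc] at h
  exact Nat.le_of_mul_le_mul_left h m.factorial_pos

lemma choose_le_pow_mul_choose {a N : ℕ} (haN : a ≤ N) (m : ℕ) {q : ℝ} (haq : a ≤ q * N) :
    (a.choose m : ℝ) ≤ q ^ m * N.choose m := by
  rcases N.eq_zero_or_pos with rfl | hN
  · obtain rfl : a = 0 := Nat.le_zero.mp haN
    cases m <;> simp
  refine le_of_mul_le_mul_right ?_ (by positivity : (0 : ℝ) < N ^ m)
  calc (a.choose m : ℝ) * N ^ m
      ≤ N.choose m * a ^ m := mod_cast choose_mul_pow_le_choose_mul_pow haN m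
    _ ≤ N.choose m * (q * N) ^ m := by gcongr
    _ = q ^ m * N.choose m * N ^ m := by ring

lemma pow_div_factorial_le_choose_add_choose (k a b : ℕ) :
    ((a + b - 2 * k : ℕ) : ℝ) ^ k / k.factorial ≤ 2 ^ (k - 1) * (a.choose k + b.choose k) := by
  have base_le : ((a + b - 2 * k : ℕ) : ℝ) ≤ (a + 1 - k : ℕ) + (b + 1 - k : ℕ) := by
    norm_cast
    omega
  calc ((a + b - 2 * k : ℕ) : ℝ) ^ k / k.factorial
      ≤ ((a + 1 - k : ℕ) + (b + 1 - k : ℕ) : ℝ) ^ k / k.factorial := by gcongr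
    _ ≤ 2 ^ (k - 1) * ((a + 1 - k : ℕ) ^ k + (b + 1 - k : ℕ) ^ k) / k.factorial := by
        gcongr
        exact add_pow_le (Nat.cast_nonneg _) (Nat.cast_nonneg _) k
    _ = 2 ^ (k - 1) * ((a + 1 - k : ℕ) ^ k / k.factorial + (b + 1 - k : ℕ) ^ k / k.factorial) := by
        ring
    _ ≤ 2 ^ (k - 1) * (a.choose k + b.choose k) := by
        gcongr <;> exact Nat.pow_le_choose k _

lemma eventually_mul_pow_le_sub_pow {θ : ℝ} (hθ : θ < 1) (d k : ℕ) :
    ∀ᶠ n : ℕ in atTop, θ * (n : ℝ) ^ k ≤ ((n - d : ℕ) : ℝ) ^ k := by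
  have ratio_tendsto : Tendsto (fun n : ℕ ↦ (1 - (d : ℝ) / n) ^ k) atTop (𝓝 1) := by
    simpa using ((tendsto_const_div_atTop_nhds_zero_nat (d : ℝ)).const_sub 1).pow k
  filter_upwards [ratio_tendsto.eventually_const_lt hθ, eventually_gt_atTop 0,
    eventually_ge_atTop d] with n hn n_pos d_le
  calc θ * (n : ℝ) ^ k ≤ (1 - (d : ℝ) / n) ^ k * n ^ k := by gcongr
    _ = ((n - d : ℕ) : ℝ) ^ k := by
        rw [← mul_pow, Nat.cast_sub d_le]
        field_simp

lemma eventually_mul_choose_le_choose_add_choose {k : ℕ} {y : ℝ} (hy₀ : 0 ≤ y)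
    (hy : y < (2 ^ (k - 1))⁻¹) :
    ∀ᶠ n : ℕ in atTop, ∀ a b : ℕ, a + b = n →
      y * n.choose k ≤ a.choose k + b.choose k := by
  have hθ : 2 ^ (k - 1) * y < 1 := (lt_inv_mul_iff₀ (by positivity)).mp (by simpa using hy)
  filter_upwards [eventually_mul_pow_le_sub_pow hθ (2 * k) k] with n hn
  rintro a b rfl
  refine le_of_mul_le_mul_left ?_ (by positivity : (0 : ℝ) < 2 ^ (k - 1))
  calc 2 ^ (k - 1) * (y * (a + b).choose k)
      ≤ 2 ^ (k - 1) * (y * (((a + b : ℕ) : ℝ) ^ k / k.factorial)) := by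
        gcongr
        exact Nat.choose_le_pow_div k (a + b)
    _ = 2 ^ (k - 1) * y * ((a + b : ℕ) : ℝ) ^ k / k.factorial := by ring
    _ ≤ ((a + b - 2 * k : ℕ) : ℝ) ^ k / k.factorial := by gcongr
    _ ≤ 2 ^ (k - 1) * (a.choose k + b.choose k) := pow_div_factorial_le_choose_add_choose k a b

end Binomial

section BichromaticEdges

lemma disjoint_powersetCard {α : Type*} {s t : Finset α} (hst : Disjoint s t) {k : ℕ}
    (hk : k ≠ 0) : Disjoint (powersetCard k s) (powersetCard k t) := by
  refine Finset.disjoint_left.mpr fun e hes het ↦ ?_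
  rw [mem_powersetCard] at hes het
  obtain ⟨v, hv⟩ : e.Nonempty := card_ne_zero.mp (hes.2 ▸ hk)
  exact Finset.disjoint_left.mp hst (hes.1 hv) (het.1 hv)

variable {V : Type*} [Fintype V]

/-- The `k`-element vertex sets on which the 2-coloring `σ` takes both values: the hyperedges
available to a `k`-uniform hypergraph that `σ` properly colors. -/
def bichromaticEdges (k : ℕ) (σ : V → Bool) : Finset (Finset V) :=
  {e ∈ powersetCard k univ | (∃ v ∈ e, σ v = true) ∧ ∃ v ∈ e, σ v = false}

lemma mem_bichromaticEdges {k : ℕ} {σ : V → Bool} {e : Finset V} :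
    e ∈ bichromaticEdges k σ ↔
      #e = k ∧ (∃ v ∈ e, σ v = true) ∧ ∃ v ∈ e, σ v = false := by
  simp only [bichromaticEdges, mem_filter, mem_powersetCard_univ]

lemma card_bichromaticEdges_le (k : ℕ) (σ : V → Bool) :
    #(bichromaticEdges k σ) ≤ (Fintype.card V).choose k :=
  (card_filter_le _ _).trans_eq (card_powersetCard k univ)

lemma bichromaticEdges_eq_sdiff [DecidableEq V] (k : ℕ) (σ : V → Bool) :
    bichromaticEdges k σ = powersetCard k univ \
      (powersetCard k {v | σ v = true} ∪ powersetCard k {v | σ v = false}) := by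
  ext e
  simp only [mem_bichromaticEdges, Finset.mem_sdiff, mem_union, mem_powersetCard, subset_iff,
    mem_filter_univ, mem_univ]
  grind

lemma card_bichromaticEdges_add {k : ℕ} (hk : k ≠ 0) (σ : V → Bool) :
    #(bichromaticEdges k σ) +
      ((#{v | σ v = true}).choose k + (#{v | σ v = false}).choose k) =
      (Fintype.card V).choose k := by
  classical
  have classes_disjoint : Disjoint (α := Finset V) {v | σ v = true} {v | σ v = false} :=
    disjoint_filter.mpr (by simp)
  have monochromatic_subset : powersetCard k ({v | σ v = true} : Finset V) ∪
      powersetCard k {v | σ v = false} ⊆ powersetCard k univ :=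
    union_subset (powersetCard_mono (subset_univ _)) (powersetCard_mono (subset_univ _))
  have h := card_sdiff_add_card_eq_card monochromatic_subset
  rwa [← bichromaticEdges_eq_sdiff, card_union_of_disjoint
    (disjoint_powersetCard classes_disjoint hk), card_powersetCard, card_powersetCard,
    card_powersetCard, card_univ] at h

lemma eventually_card_bichromaticEdges_le {k : ℕ} (hk : k ≠ 0) {q : ℝ}
    (hq : 1 - (2 ^ (k - 1))⁻¹ < q) (hq₁ : q ≤ 1) :
    ∀ᶠ n : ℕ in atTop, ∀ σ : Fin n → Bool,
      (#(bichromaticEdges k σ) : ℝ) ≤ q * n.choose k := by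
  filter_upwards [eventually_mul_choose_le_choose_add_choose (sub_nonneg.mpr hq₁)
    (sub_lt_comm.mp hq)] with n hn σ
  have card_classes : #{v | σ v = true} + #{v | σ v = false} = n := by
    simpa using card_filter_add_card_filter_not (s := univ) (σ · = true)
  have monochromatic_ge := hn _ _ card_classes
  have card_add : (#(bichromaticEdges k σ) : ℝ) +
      ((#{v | σ v = true}).choose k + (#{v | σ v = false}).choose k) = n.choose k := by
    exact_mod_cast Fintype.card_fin n ▸ card_bichromaticEdges_add hk σ
  linarith

end BichromaticEdges

section UnionBound

/-- The probability that the random hypergraph `H_k(n, m)` is 2-colorable, as a ratio of counts.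
It is the junk value `0 / 0 = 0` when there are fewer than `m` possible hyperedges. -/
noncomputable def twoColorableProb (k n m : ℕ) : ℝ :=
  (Nat.card {H : Finset (Finset (Fin n)) //
      #H = m ∧ (∀ e ∈ H, #e = k) ∧ IsTwoColorable H} : ℝ) / ((n.choose k).choose m : ℝ)

lemma card_twoColorable_le_sum (k n m : ℕ) :
    Nat.card {H : Finset (Finset (Fin n)) // #H = m ∧ (∀ e ∈ H, #e = k) ∧ IsTwoColorable H} ≤
      ∑ σ : Fin n → Bool, (#(bichromaticEdges k σ)).choose m := by
  classical
  simp_rw [Nat.card_eq_fintype_card, Fintype.card_subtype, ← card_powersetCard]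
  refine (card_le_card fun H hH ↦ ?_).trans card_biUnion_le
  obtain ⟨card_H, uniform, σ, proper⟩ := (mem_filter.mp hH).2
  refine mem_biUnion.mpr ⟨σ, mem_univ σ, mem_powersetCard.mpr ⟨fun e he ↦ ?_, card_H⟩⟩
  exact mem_bichromaticEdges.mpr ⟨uniform e he, proper e he⟩

lemma twoColorableProb_le {k n : ℕ} {q : ℝ} (hq₀ : 0 ≤ q)
    (hq : ∀ σ : Fin n → Bool, (#(bichromaticEdges k σ) : ℝ) ≤ q * n.choose k) (m : ℕ) :
    twoColorableProb k n m ≤ 2 ^ n * q ^ m := by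
  refine div_le_of_le_mul₀ (by positivity) (by positivity) ?_
  calc (Nat.card {H : Finset (Finset (Fin n)) //
          #H = m ∧ (∀ e ∈ H, #e = k) ∧ IsTwoColorable H} : ℝ)
      ≤ ∑ σ : Fin n → Bool, ((#(bichromaticEdges k σ)).choose m : ℝ) :=
        mod_cast card_twoColorable_le_sum k n m
    _ ≤ ∑ _σ : Fin n → Bool, q ^ m * (n.choose k).choose m :=
        sum_le_sum fun σ _ ↦ choose_le_pow_mul_choose
          (by simpa using card_bichromaticEdges_le k σ) m (hq σ)
    _ = 2 ^ n * q ^ m * (n.choose k).choose m := by simp [mul_assoc]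

end UnionBound

section Threshold

lemma log_one_sub_mul_le_neg_one {x : ℝ} (hx₀ : 0 < x) (hx₁ : x < 1) :
    Real.log (1 - x) * (1 / x - 1 / 2) ≤ -1 := by
  have one_sub_pos : 0 < 1 - x := sub_pos.mpr hx₁
  have two_sub_pos : 0 < 2 - x := by linarith
  have le_neg_log : 2 * x / (2 - x) ≤ -Real.log (1 - x) := by
    rw [← Real.log_inv]
    convert Real.le_log_one_add_of_nonneg (x := x / (1 - x)) (by positivity) using 1
    · field_simp
      ring
    · congr 1
      field_simp
      ring
  calc Real.log (1 - x) * (1 / x - 1 / 2)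
      = -(-Real.log (1 - x) * ((2 - x) / (2 * x))) := by field_simp
    _ ≤ -(2 * x / (2 - x) * ((2 - x) / (2 * x))) := by gcongr
    _ = -1 := by field_simp

lemma mul_one_sub_rpow_lt_one {a x c : ℝ} (ha : 1 ≤ a) (hx₀ : 0 < x) (hx₁ : x < 1)
    (hc : Real.log a * (1 / x - 1 / 2) < c) : a * (1 - x) ^ c < 1 := by
  have one_sub_pos : 0 < 1 - x := sub_pos.mpr hx₁
  have a_pos : 0 < a := one_pos.trans_le ha
  rw [← Real.log_neg_iff (by positivity), Real.log_mul a_pos.ne' (by positivity),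
    Real.log_rpow one_sub_pos]
  have log_neg : Real.log (1 - x) < 0 := Real.log_neg one_sub_pos (by linarith)
  have exponent_lt : c * Real.log (1 - x) < -Real.log a := by
    calc c * Real.log (1 - x)
        < Real.log a * (1 / x - 1 / 2) * Real.log (1 - x) := mul_lt_mul_of_neg_right hc log_neg
      _ = Real.log a * (Real.log (1 - x) * (1 / x - 1 / 2)) := by ring
      _ ≤ Real.log a * -1 :=
          mul_le_mul_of_nonneg_left (log_one_sub_mul_le_neg_one hx₀ hx₁) (Real.log_nonneg ha)
      _ = -Real.log a := by ring
  linarith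

lemma exists_gt_mul_rpow_lt_one {a p c : ℝ} (hp₀ : 0 < p) (hp₁ : p < 1) (h : a * p ^ c < 1) :
    ∃ q, p < q ∧ q < 1 ∧ a * q ^ c < 1 := by
  have continuousAt_rpow : ContinuousAt (fun q : ℝ ↦ a * q ^ c) p :=
    (Real.continuousAt_rpow_const p c (.inl hp₀.ne')).const_mul a
  have eventually_lt : ∀ᶠ q in 𝓝[>] p, a * q ^ c < 1 :=
    (continuousAt_rpow.eventually_lt_const h).filter_mono nhdsWithin_le_nhds
  obtain ⟨q, hq, hpq, hq₁⟩ := (eventually_lt.and (Ioo_mem_nhdsGT hp₁)).exists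
  exact ⟨q, hpq, hq₁, hq⟩

lemma tendsto_pow_mul_pow_floor_zero {a q c : ℝ} (ha : 0 ≤ a) (hq₀ : 0 < q) (hq₁ : q ≤ 1)
    (h : a * q ^ c < 1) :
    Tendsto (fun n : ℕ ↦ a ^ n * q ^ ⌊c * (n : ℝ)⌋₊) atTop (𝓝 0) := by
  have geometric : Tendsto (fun n : ℕ ↦ (a * q ^ c) ^ n * q⁻¹) atTop (𝓝 0) := by
    simpa using (tendsto_pow_atTop_nhds_zero_of_lt_one (by positivity) h).mul_const q⁻¹
  refine squeeze_zero (fun n ↦ by positivity) (fun n ↦ ?_) geometric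
  calc a ^ n * q ^ ⌊c * (n : ℝ)⌋₊
      ≤ a ^ n * q ^ (c * n - 1) := by
        rw [← Real.rpow_natCast q]
        gcongr a ^ n * ?_
        exact Real.rpow_le_rpow_of_exponent_ge hq₀ hq₁ (Nat.sub_one_lt_floor _).le
    _ = (a * q ^ c) ^ n * q⁻¹ := by
        rw [Real.rpow_sub hq₀, Real.rpow_mul_natCast hq₀.le, Real.rpow_one, mul_pow]
        ring

end Threshold

theorem hypergraph_noncolorable_whp_general {k : ℕ} (hk : 2 ≤ k) {c : ℝ}
    (hc : 2 ^ (k - 1) * Real.log 2 - Real.log 2 / 2 < c) :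
    Tendsto (fun n : ℕ ↦ twoColorableProb k n ⌊c * (n : ℝ)⌋₊) atTop (𝓝 0) := by
  have x_pos : (0 : ℝ) < (2 ^ (k - 1))⁻¹ := by positivity
  have x_lt_one : ((2 : ℝ) ^ (k - 1))⁻¹ < 1 :=
    inv_lt_one_of_one_lt₀ (one_lt_pow₀ one_lt_two (by omega))
  have first_moment_lt : 2 * (1 - ((2 : ℝ) ^ (k - 1))⁻¹) ^ c < 1 :=
    mul_one_sub_rpow_lt_one one_le_two x_pos x_lt_one
      (by rw [one_div, inv_inv]; linarith)
  obtain ⟨q, hq, q_lt_one, hqc⟩ := exists_gt_mul_rpow_lt_one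
    (sub_pos.mpr x_lt_one) (sub_lt_self 1 x_pos) first_moment_lt
  have q_pos : 0 < q := (sub_pos.mpr x_lt_one).trans hq
  refine squeeze_zero' (.of_forall fun n ↦ by unfold twoColorableProb; positivity) ?_
    (tendsto_pow_mul_pow_floor_zero zero_le_two q_pos q_lt_one.le hqc)
  filter_upwards [eventually_card_bichromaticEdges_le (by omega) hq q_lt_one.le] with n hn
  exact twoColorableProb_le q_pos.le hn _

/-- For all `k ≥ 3` and `c > 2^(k-1) ln 2 - (ln 2)/2`, the probability that a uniformly
random `k`-uniform hypergraph with `⌊cn⌋` hyperedges is 2-colorable tends to `0`. -/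
theorem hypergraph_noncolorable_whp (k : ℕ) (hk : 3 ≤ k) (c : ℝ)
    (hc : 2 ^ (k - 1) * Real.log 2 - Real.log 2 / 2 < c) :
    Filter.Tendsto
      (fun n : ℕ =>
        (Nat.card {H : Finset (Finset (Fin n)) //
            H.card = ⌊c * (n : ℝ)⌋₊ ∧ (∀ e ∈ H, e.card = k) ∧ IsTwoColorable H} : ℝ) /
          (Nat.choose (Nat.choose n k) ⌊c * (n : ℝ)⌋₊ : ℝ))
      Filter.atTop (nhds 0) :=
  hypergraph_noncolorable_whp_general (by omega) hc
end

section
/- For every integer k ≥ 3 and every real r > 2^(k-1)·ln 2 − (ln 2)/2, the probability that a random k-CNF formula F_k(n, m) with m = ⌊rn⌋ clauses is NAE-satisfiable tends to 0 as n → ∞. -/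
/-- An assignment NAE-satisfies a clause if it satisfies at least one literal and
fails to satisfy at least one literal. -/
def NAESatisfiesClause {n : ℕ} (σ : Fin n → Bool) (C : Finset (Fin n × Bool)) : Prop :=
  (∃ l ∈ C, σ l.1 = l.2) ∧ (∃ l ∈ C, σ l.1 ≠ l.2)

/-- A formula is NAE-satisfiable if some assignment NAE-satisfies every clause. -/
def IsNAESatisfiable {n : ℕ} (F : Finset (Finset (Fin n × Bool))) : Prop :=
  ∃ σ : Fin n → Bool, ∀ C ∈ F, NAESatisfiesClause σ C

/-!
First moment method. A proper `k`-clause is determined by its set `T` of variables and the subset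
of `T` on which it agrees with a fixed assignment; being NAE-satisfied excludes the subsets `∅` and
`T`. So each assignment satisfies a formula with probability at most `(1 - y⁻¹) ^ m`, where
`y = 2 ^ (k - 1)`, and the union bound gives `2 ^ n * (1 - y⁻¹) ^ m` for NAE-satisfiability. With
`x = y - 1 / 2`, the Padé bound `(2 - t) / (2 + t) ≤ exp (-t)` at `t = x⁻¹` reads
`1 - y⁻¹ ≤ exp (-x⁻¹)`, so the bound decays once `r > x * log 2`, which is the threshold.
-/

open Finset Filter Topology

section Clauses

variable {n k : ℕ} {σ : Fin n → Bool} {C : Finset (Fin n × Bool)}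

/-- The variables of the literals of `C` that `σ` satisfies; together with the set of all variables
of `C` it determines a proper clause. -/
def satisfiedVars (σ : Fin n → Bool) (C : Finset (Fin n × Bool)) : Finset (Fin n) :=
  {l ∈ C | σ l.1 = l.2}.image Prod.fst

open Classical in
/-- The proper `k`-clauses that `σ` NAE-satisfies: a random formula is NAE-satisfied by `σ` exactly
when all its clauses are drawn from this set. -/
noncomputable def naeClauses (k : ℕ) (σ : Fin n → Bool) : Finset (Finset (Fin n × Bool)) :=
  {C | IsProperClause n k C ∧ NAESatisfiesClause σ C}

theorem mem_naeClauses : C ∈ naeClauses k σ ↔ IsProperClause n k C ∧ NAESatisfiesClause σ C := by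
  simp only [naeClauses, mem_filter_univ]

theorem IsProperClause.injOn_fst (hC : IsProperClause n k C) :
    Set.InjOn Prod.fst (C : Set (Fin n × Bool)) :=
  card_image_iff.mp (hC.2.trans hC.1.symm)

theorem IsProperClause.fst_mem_satisfiedVars_iff (hC : IsProperClause n k C) {l : Fin n × Bool}
    (hl : l ∈ C) : l.1 ∈ satisfiedVars σ C ↔ σ l.1 = l.2 := by
  refine ⟨fun h => ?_, fun h => mem_image_of_mem _ (mem_filter.mpr ⟨hl, h⟩)⟩
  obtain ⟨l', hl', hfst⟩ := mem_image.mp h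
  obtain ⟨hl'C, hsat⟩ := mem_filter.mp hl'
  rwa [← hC.injOn_fst hl'C hl hfst]

theorem IsProperClause.mem_iff (hC : IsProperClause n k C) {l : Fin n × Bool} :
    l ∈ C ↔ l.1 ∈ C.image Prod.fst ∧ (l.1 ∈ satisfiedVars σ C ↔ σ l.1 = l.2) := by
  refine ⟨fun hl => ⟨mem_image_of_mem _ hl, hC.fst_mem_satisfiedVars_iff hl⟩, ?_⟩
  rintro ⟨hvar, hsign⟩
  obtain ⟨l', hl', hfst⟩ := mem_image.mp hvar
  have hiff : σ l.1 = l'.2 ↔ σ l.1 = l.2 := by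
    rw [← hsign, ← hfst, hC.fst_mem_satisfiedVars_iff hl']
  have hsnd : l'.2 = l.2 := by cases h : σ l.1 <;> simp_all
  rwa [← Prod.ext hfst hsnd]

theorem NAESatisfiesClause.satisfiedVars_nonempty (hσ : NAESatisfiesClause σ C) :
    (satisfiedVars σ C).Nonempty := by
  obtain ⟨l, hl, hsat⟩ := hσ.1
  exact ⟨l.1, mem_image_of_mem _ (mem_filter.mpr ⟨hl, hsat⟩)⟩

theorem NAESatisfiesClause.satisfiedVars_ssubset (hσ : NAESatisfiesClause σ C)
    (hC : IsProperClause n k C) : satisfiedVars σ C ⊂ C.image Prod.fst := by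
  obtain ⟨l, hl, hunsat⟩ := hσ.2
  exact (ssubset_iff_of_subset (image_subset_image (filter_subset _ _))).mpr
    ⟨l.1, mem_image_of_mem _ hl, mt (hC.fst_mem_satisfiedVars_iff hl).mp hunsat⟩

theorem card_ssubsets_erase_empty {α : Type*} [DecidableEq α] (T : Finset α) :
    #(T.ssubsets.erase ∅) = 2 ^ #T - 2 := by
  obtain rfl | hT := T.eq_empty_or_nonempty
  · rfl
  · rw [card_erase_of_mem (empty_mem_ssubsets hT), ssubsets, card_erase_of_mem (by simp),
      card_powerset, Nat.sub_sub]

theorem card_naeClauses_le (k : ℕ) (σ : Fin n → Bool) :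
    #(naeClauses k σ) ≤ (2 ^ k - 2) * n.choose k := by
  let pairs : Finset (Σ _ : Finset (Fin n), Finset (Fin n)) :=
    (powersetCard k univ).sigma fun T => T.ssubsets.erase ∅
  have card_pairs : #pairs = (2 ^ k - 2) * n.choose k := by
    rw [card_sigma, sum_congr rfl fun T hT => by
      rw [card_ssubsets_erase_empty, (mem_powersetCard.mp hT).2]]
    rw [sum_const, card_powersetCard, card_fin, smul_eq_mul, mul_comm]
  rw [← card_pairs]
  refine card_le_card_of_injOn (fun C => ⟨C.image Prod.fst, satisfiedVars σ C⟩) ?_ ?_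
  · intro C hC
    obtain ⟨hproper, hnae⟩ := mem_naeClauses.mp hC
    refine mem_sigma.mpr ⟨mem_powersetCard.mpr ⟨subset_univ _, hproper.2⟩, mem_erase.mpr ?_⟩
    exact ⟨hnae.satisfiedVars_nonempty.ne_empty,
      mem_ssubsets.mpr (hnae.satisfiedVars_ssubset hproper)⟩
  · intro C hC C' hC' heq
    obtain ⟨hvars, hsat⟩ := Sigma.mk.injEq .. ▸ heq
    ext l
    rw [(mem_naeClauses.mp hC).1.mem_iff (σ := σ), (mem_naeClauses.mp hC').1.mem_iff (σ := σ),
      hvars, eq_of_heq hsat]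

theorem exists_subset_naeClauses_iff {F : Finset (Finset (Fin n × Bool))} :
    (∃ σ, F ⊆ naeClauses k σ) ↔ (∀ C ∈ F, IsProperClause n k C) ∧ IsNAESatisfiable F := by
  simp only [subset_iff, mem_naeClauses, forall₂_and, exists_and_left, IsNAESatisfiable]

theorem natCard_isNAESatisfiable_le (n k m : ℕ) :
    Nat.card {F : Finset (Finset (Fin n × Bool)) //
        F.card = m ∧ (∀ C ∈ F, IsProperClause n k C) ∧ IsNAESatisfiable F} ≤
      2 ^ n * ((2 ^ k - 2) * n.choose k).choose m := by
  classical
  rw [Nat.subtype_card (univ.biUnion fun σ : Fin n → Bool => powersetCard m (naeClauses k σ))]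
  · calc
      _ ≤ #(univ : Finset (Fin n → Bool)) * ((2 ^ k - 2) * n.choose k).choose m := by
        refine card_biUnion_le_card_mul _ _ _ fun σ _ => ?_
        rw [card_powersetCard]
        exact Nat.choose_le_choose m (card_naeClauses_le k σ)
      _ = _ := by rw [card_univ, Fintype.card_fun, Fintype.card_bool, Fintype.card_fin]
  · intro F
    simp only [mem_biUnion, mem_univ, true_and, mem_powersetCard, exists_and_right,
      exists_subset_naeClauses_iff]
    exact and_comm

end Clauses

section Choose

variable {K : Type*} [Field K] [LinearOrder K] [IsStrictOrderedRing K] {a b : ℕ} {q : K}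

theorem cast_tsub_le_mul_cast_tsub (hq₀ : 0 ≤ q) (hq₁ : q ≤ 1) (hab : (a : K) ≤ q * b) (m : ℕ) :
    ((a - m : ℕ) : K) ≤ q * (b - m : ℕ) := by
  obtain ham | hma := le_total a m
  · rw [Nat.sub_eq_zero_of_le ham, Nat.cast_zero]
    positivity
  · have hb : (b : K) ≤ (b - m : ℕ) + m := mod_cast le_tsub_add
    calc
      ((a - m : ℕ) : K) = a - m := Nat.cast_sub hma
      _ ≤ q * ((b - m : ℕ) + m) - q * m := by
        have hqb := mul_le_mul_of_nonneg_left hb hq₀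
        have hqm := mul_le_of_le_one_left (Nat.cast_nonneg (α := K) m) hq₁
        linarith
      _ = q * (b - m : ℕ) := by ring

theorem cast_descFactorial_le_pow_mul (hq₀ : 0 ≤ q) (hq₁ : q ≤ 1) (hab : (a : K) ≤ q * b)
    (m : ℕ) : (a.descFactorial m : K) ≤ q ^ m * b.descFactorial m := by
  induction m with
  | zero => simp
  | succ m ih =>
    rw [Nat.descFactorial_succ, Nat.descFactorial_succ, Nat.cast_mul, Nat.cast_mul]
    calc
      _ ≤ q * (b - m : ℕ) * (q ^ m * b.descFactorial m) := by
        gcongr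
        exact cast_tsub_le_mul_cast_tsub hq₀ hq₁ hab m
      _ = _ := by ring

theorem cast_choose_le_pow_mul (hq₀ : 0 ≤ q) (hq₁ : q ≤ 1) (hab : (a : K) ≤ q * b) (m : ℕ) :
    (a.choose m : K) ≤ q ^ m * b.choose m := by
  have hdesc := cast_descFactorial_le_pow_mul hq₀ hq₁ hab m
  rw [Nat.descFactorial_eq_factorial_mul_choose, Nat.descFactorial_eq_factorial_mul_choose,
    Nat.cast_mul, Nat.cast_mul, mul_left_comm] at hdesc
  exact le_of_mul_le_mul_left hdesc (mod_cast m.factorial_pos)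

end Choose

theorem cast_two_pow_sub_two_eq {k : ℕ} (hk : 1 ≤ k) :
    ((2 ^ k - 2 : ℕ) : ℝ) = (1 - (2 ^ (k - 1))⁻¹) * 2 ^ k := by
  obtain ⟨j, rfl⟩ := Nat.exists_eq_add_of_le' hk
  rw [Nat.cast_sub (Nat.le_self_pow (by lia) 2), Nat.add_sub_cancel]
  push_cast
  field_simp
  ring

theorem natCard_isNAESatisfiable_div_choose_le {k : ℕ} (hk : 1 ≤ k) (n m : ℕ) :
    (Nat.card {F : Finset (Finset (Fin n × Bool)) //
        F.card = m ∧ (∀ C ∈ F, IsProperClause n k C) ∧ IsNAESatisfiable F} : ℝ) /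
      (2 ^ k * n.choose k).choose m ≤ 2 ^ n * (1 - (2 ^ (k - 1))⁻¹) ^ m := by
  have hq₀ : (0 : ℝ) ≤ 1 - (2 ^ (k - 1))⁻¹ :=
    sub_nonneg.mpr (inv_le_one_of_one_le₀ (one_le_pow₀ one_le_two))
  have hq₁ : 1 - (2 ^ (k - 1))⁻¹ ≤ (1 : ℝ) := sub_le_self _ (by positivity)
  have hclauses : (((2 ^ k - 2) * n.choose k : ℕ) : ℝ) ≤
      (1 - (2 ^ (k - 1))⁻¹) * (2 ^ k * n.choose k : ℕ) := by
    rw [Nat.cast_mul, cast_two_pow_sub_two_eq hk]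
    push_cast
    exact (mul_assoc ..).le
  refine div_le_of_le_mul₀ (by positivity) (by positivity) ?_
  calc
    _ ≤ (2 : ℝ) ^ n * ((2 ^ k - 2) * n.choose k).choose m :=
      mod_cast natCard_isNAESatisfiable_le n k m
    _ ≤ 2 ^ n * ((1 - (2 ^ (k - 1))⁻¹) ^ m * (2 ^ k * n.choose k).choose m) := by
      gcongr
      exact cast_choose_le_pow_mul hq₀ hq₁ hclauses m
    _ = _ := (mul_assoc ..).symm

theorem two_sub_div_two_add_le_exp_neg {x : ℝ} (hx : 0 ≤ x) :
    (2 - x) / (2 + x) ≤ Real.exp (-x) := by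
  obtain hx₂ | hx₂ := lt_or_ge x 2
  · rw [Real.exp_neg, ← inv_div]
    exact inv_anti₀ (Real.exp_pos x) (Real.exp_le_two_add_div_two_sub hx hx₂)
  · exact (div_nonpos_of_nonpos_of_nonneg (by linarith) (by linarith)).trans (Real.exp_nonneg _)

theorem one_sub_inv_add_half_le_exp_neg_inv {x : ℝ} (hx : 0 < x) :
    1 - (x + 1 / 2)⁻¹ ≤ Real.exp (-x⁻¹) := by
  calc
    1 - (x + 1 / 2)⁻¹ = (2 - x⁻¹) / (2 + x⁻¹) := by
      field_simp
      ring
    _ ≤ Real.exp (-x⁻¹) := two_sub_div_two_add_le_exp_neg (inv_nonneg.mpr hx.le)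

theorem pow_floor_le_inv_mul_rpow_pow {b : ℝ} (hb₀ : 0 < b) (hb₁ : b ≤ 1) (r : ℝ) (n : ℕ) :
    b ^ ⌊r * n⌋₊ ≤ b⁻¹ * (b ^ r) ^ n := by
  calc
    b ^ ⌊r * n⌋₊ = b ^ (⌊r * n⌋₊ : ℝ) := (Real.rpow_natCast ..).symm
    _ ≤ b ^ (r * n - 1) :=
      Real.rpow_le_rpow_of_exponent_ge hb₀ hb₁ (Nat.sub_one_lt_floor _).le
    _ = b⁻¹ * (b ^ r) ^ n := by
      rw [Real.rpow_sub_one hb₀.ne', Real.rpow_mul_natCast hb₀.le, div_eq_inv_mul]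

theorem tendsto_pow_mul_pow_floor {a b r : ℝ} (ha : 0 ≤ a) (hb₀ : 0 < b) (hb₁ : b ≤ 1)
    (hab : a * b ^ r < 1) : Tendsto (fun n : ℕ => a ^ n * b ^ ⌊r * n⌋₊) atTop (𝓝 0) := by
  have hgeom : Tendsto (fun n : ℕ => b⁻¹ * (a * b ^ r) ^ n) atTop (𝓝 0) := by
    simpa only [mul_zero] using
      (tendsto_pow_atTop_nhds_zero_of_lt_one (by positivity) hab).const_mul b⁻¹
  refine squeeze_zero (fun n => by positivity) (fun n => ?_) hgeom
  calc
    a ^ n * b ^ ⌊r * n⌋₊ ≤ a ^ n * (b⁻¹ * (b ^ r) ^ n) := by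
      gcongr
      exact pow_floor_le_inv_mul_rpow_pow hb₀ hb₁ r n
    _ = b⁻¹ * (a * b ^ r) ^ n := by ring

theorem two_mul_exp_neg_inv_rpow_lt_one {x r : ℝ} (hx : 0 < x) (hr : x * Real.log 2 < r) :
    2 * Real.exp (-x⁻¹) ^ r < 1 := by
  calc
    2 * Real.exp (-x⁻¹) ^ r = Real.exp (Real.log 2 - x⁻¹ * r) := by
      rw [← Real.exp_mul, neg_mul, sub_eq_add_neg, Real.exp_add, Real.exp_log two_pos]
    _ < 1 := Real.exp_lt_one_iff.mpr (sub_neg.mpr ((lt_inv_mul_iff₀ hx).mpr hr))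

theorem nae_ksat_unsat_whp_general (k : ℕ) (hk : 1 ≤ k) (r : ℝ)
    (hr : 2 ^ (k - 1) * Real.log 2 - Real.log 2 / 2 < r) :
    Filter.Tendsto
      (fun n : ℕ =>
        (Nat.card {F : Finset (Finset (Fin n × Bool)) //
            F.card = ⌊r * (n : ℝ)⌋₊ ∧ (∀ C ∈ F, IsProperClause n k C) ∧
              IsNAESatisfiable F} : ℝ) /
          (Nat.choose (2 ^ k * Nat.choose n k) ⌊r * (n : ℝ)⌋₊ : ℝ))
      Filter.atTop (nhds 0) := by
  have hy : (1 : ℝ) ≤ 2 ^ (k - 1) := one_le_pow₀ one_le_two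
  have hx : (0 : ℝ) < 2 ^ (k - 1) - 1 / 2 := by linarith
  have hlim : Tendsto (fun n : ℕ => 2 ^ n * Real.exp (-(2 ^ (k - 1) - 1 / 2)⁻¹) ^ ⌊r * n⌋₊)
      atTop (𝓝 0) :=
    tendsto_pow_mul_pow_floor zero_le_two (Real.exp_pos _)
      (Real.exp_le_one_iff.mpr (neg_nonpos.mpr (inv_nonneg.mpr hx.le)))
      (two_mul_exp_neg_inv_rpow_lt_one hx (by linarith))
  refine squeeze_zero (fun n => by positivity) (fun n => ?_) hlim
  refine (natCard_isNAESatisfiable_div_choose_le hk n _).trans ?_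
  gcongr
  · exact sub_nonneg.mpr (inv_le_one_of_one_le₀ hy)
  · simpa only [sub_add_cancel] using one_sub_inv_add_half_le_exp_neg_inv hx

/-- For all `k ≥ 3` and `r > 2^(k-1) ln 2 - (ln 2)/2`, the probability that a uniformly
random `k`-CNF formula with `⌊rn⌋` clauses is NAE-satisfiable tends to `0`. -/
theorem nae_ksat_unsat_whp (k : ℕ) (hk : 3 ≤ k) (r : ℝ)
    (hr : 2 ^ (k - 1) * Real.log 2 - Real.log 2 / 2 < r) :
    Filter.Tendsto
      (fun n : ℕ =>
        (Nat.card {F : Finset (Finset (Fin n × Bool)) //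
            F.card = ⌊r * (n : ℝ)⌋₊ ∧ (∀ C ∈ F, IsProperClause n k C) ∧
              IsNAESatisfiable F} : ℝ) /
          (Nat.choose (2 ^ k * Nat.choose n k) ⌊r * (n : ℝ)⌋₊ : ℝ))
      Filter.atTop (nhds 0) :=
  nae_ksat_unsat_whp_general k (by lia) r hr
end

section
/- Let n, k be positive integers and let σ, τ : {1,…,n} → {0,1} be two assignments that agree on exactly z of the n variables. Then the number of ordered k-clauses on n variables that are NAE-satisfied by both σ and τ equals (2n)^k − 4·n^k + 2·z^k + 2·(n−z)^k. -/
/-!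
A clause fails to be NAE-satisfied by `σ` iff all its literals lie in the set `A` of literals
satisfied by `σ`, or all lie in `Aᶜ`. With `B` the corresponding set for `τ`, inclusion–exclusion
reduces the count to the sizes of `A`, `B`, their complements, and the four intersections of one
set from `{A, Aᶜ}` with one from `{B, Bᶜ}`. Since `Aᶜ` is the set of literals satisfied by the
negation of `σ`, all these sizes follow from a single count: the literals satisfied by both of two
assignments correspond to the variables on which the assignments agree.
-/

open Finset

theorem disjoint_piFinset_const {ι L : Type*} [Fintype ι] [DecidableEq ι] [Nonempty ι]
    {A B : Finset L} (hAB : Disjoint A B) :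
    Disjoint (Fintype.piFinset fun _ : ι ↦ A) (Fintype.piFinset fun _ ↦ B) :=
  Fintype.piFinset_disjoint_of_disjoint _ _ (a := Classical.arbitrary ι) hAB

section Monochromatic

variable (ι : Type*) {L : Type*} [Fintype ι] [DecidableEq ι] [Fintype L] [DecidableEq L]

/-- The tuples that are monochromatic for the two-colouring `{A, Aᶜ}` of `L`. When `A` is the set of
literals satisfied by an assignment, these are the clauses that it does not NAE-satisfy. -/
def monochromaticTuples (A : Finset L) : Finset (ι → L) :=
  Fintype.piFinset (fun _ ↦ A) ∪ Fintype.piFinset (fun _ ↦ Aᶜ)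

variable {ι}

theorem mem_monochromaticTuples {A : Finset L} {c : ι → L} :
    c ∈ monochromaticTuples ι A ↔ (∀ j, c j ∈ A) ∨ ∀ j, c j ∉ A := by
  simp [monochromaticTuples]

theorem card_monochromaticTuples [Nonempty ι] (A : Finset L) :
    #(monochromaticTuples ι A) = #A ^ Fintype.card ι + #Aᶜ ^ Fintype.card ι := by
  rw [monochromaticTuples, card_union_of_disjoint (disjoint_piFinset_const disjoint_compl_right),
    Fintype.card_piFinset, Fintype.card_piFinset, prod_const, prod_const, card_univ]

theorem card_piFinset_const_inter_monochromaticTuples [Nonempty ι] (A B : Finset L) :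
    #(Fintype.piFinset (fun _ ↦ A) ∩ monochromaticTuples ι B) =
      #(A ∩ B) ^ Fintype.card ι + #(A ∩ Bᶜ) ^ Fintype.card ι := by
  have hdisj : Disjoint (A ∩ B) (A ∩ Bᶜ) :=
    disjoint_compl_right.mono inter_subset_right inter_subset_right
  rw [monochromaticTuples, inter_union_distrib_left, ← Fintype.piFinset_inter,
    ← Fintype.piFinset_inter, card_union_of_disjoint (disjoint_piFinset_const hdisj),
    Fintype.card_piFinset, Fintype.card_piFinset, prod_const, prod_const, card_univ]

theorem card_monochromaticTuples_inter [Nonempty ι] (A B : Finset L) :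
    #(monochromaticTuples ι A ∩ monochromaticTuples ι B) =
      #(A ∩ B) ^ Fintype.card ι + #(A ∩ Bᶜ) ^ Fintype.card ι +
        (#(Aᶜ ∩ B) ^ Fintype.card ι + #(Aᶜ ∩ Bᶜ) ^ Fintype.card ι) := by
  have hdisj : Disjoint (Fintype.piFinset fun _ : ι ↦ A) (Fintype.piFinset fun _ ↦ Aᶜ) :=
    disjoint_piFinset_const disjoint_compl_right
  rw [monochromaticTuples, union_inter_distrib_right,
    card_union_of_disjoint (hdisj.mono inter_subset_left inter_subset_left),
    card_piFinset_const_inter_monochromaticTuples, card_piFinset_const_inter_monochromaticTuples]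

end Monochromatic

theorem cast_card_compl_union {α : Type*} [Fintype α] [DecidableEq α] (s t : Finset α) :
    (#(s ∪ t)ᶜ : ℤ) = Fintype.card α - #s - #t + #(s ∩ t) := by
  have hcompl := card_compl_add_card (s ∪ t)
  have hunion := card_union_add_card_inter s t
  omega

section Literals

variable {V : Type*} [Fintype V]

/-- The literals satisfied by the assignment `σ`, the literal `(v, s)` being satisfied when
`σ v = s`. -/
def satisfiedLiterals (σ : V → Bool) : Finset (V × Bool) := {l | σ l.1 = l.2}

theorem mem_satisfiedLiterals {σ : V → Bool} {l : V × Bool} :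
    l ∈ satisfiedLiterals σ ↔ σ l.1 = l.2 := by
  simp [satisfiedLiterals]

theorem card_satisfiedLiterals_inter [DecidableEq V] (σ τ : V → Bool) :
    #(satisfiedLiterals σ ∩ satisfiedLiterals τ) = #{v | σ v = τ v} := by
  refine card_nbij' Prod.fst (fun v ↦ (v, σ v)) ?_ ?_ ?_ ?_ <;>
    simp +contextual [Set.MapsTo, Set.LeftInvOn, mem_satisfiedLiterals]

theorem card_satisfiedLiterals (σ : V → Bool) : #(satisfiedLiterals σ) = Fintype.card V := by
  classical
  simpa using card_satisfiedLiterals_inter σ σ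

variable [DecidableEq V]

theorem compl_satisfiedLiterals (σ : V → Bool) :
    (satisfiedLiterals σ)ᶜ = satisfiedLiterals fun v ↦ !σ v := by
  ext l
  rw [mem_compl, mem_satisfiedLiterals, mem_satisfiedLiterals, Bool.not_eq]

theorem card_satisfiedLiterals_inter_compl (σ τ : V → Bool) :
    #(satisfiedLiterals σ ∩ (satisfiedLiterals τ)ᶜ) = #{v | σ v ≠ τ v} := by
  simp only [compl_satisfiedLiterals, card_satisfiedLiterals_inter, Bool.eq_not]

theorem card_compl_satisfiedLiterals_inter (σ τ : V → Bool) :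
    #((satisfiedLiterals σ)ᶜ ∩ satisfiedLiterals τ) = #{v | σ v ≠ τ v} := by
  simp only [compl_satisfiedLiterals, card_satisfiedLiterals_inter, Bool.not_eq]

theorem card_compl_satisfiedLiterals_inter_compl (σ τ : V → Bool) :
    #((satisfiedLiterals σ)ᶜ ∩ (satisfiedLiterals τ)ᶜ) = #{v | σ v = τ v} := by
  simp only [compl_satisfiedLiterals, card_satisfiedLiterals_inter, Bool.not_inj_iff]

end Literals

/-- The assignment `σ` NAE-satisfies (not-all-equal) the clause `c`, a tuple of literals: it
satisfies some literal of `c` and fails to satisfy some literal of `c`. -/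
def NAESatisfies {V ι : Type*} (σ : V → Bool) (c : ι → V × Bool) : Prop :=
  (∃ j, σ (c j).1 = (c j).2) ∧ ∃ j, σ (c j).1 ≠ (c j).2

section Clauses

variable {V ι : Type*} [Fintype V] [Fintype ι]

theorem naeSatisfies_iff_notMem_monochromaticTuples [DecidableEq V] [DecidableEq ι]
    {σ : V → Bool} {c : ι → V × Bool} :
    NAESatisfies σ c ↔ c ∉ monochromaticTuples ι (satisfiedLiterals σ) := by
  simp only [NAESatisfies, mem_monochromaticTuples, mem_satisfiedLiterals, not_or, not_forall,
    not_not, ne_eq, and_comm]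

theorem card_naeSatisfies_both [DecidableEq V] [DecidableEq ι] (σ τ : V → Bool) :
    Nat.card {c : ι → V × Bool // NAESatisfies σ c ∧ NAESatisfies τ c} =
      #(monochromaticTuples ι (satisfiedLiterals σ) ∪
        monochromaticTuples ι (satisfiedLiterals τ))ᶜ := by
  refine Nat.subtype_card _ fun c ↦ ?_
  rw [mem_compl, mem_union, not_or, ← naeSatisfies_iff_notMem_monochromaticTuples,
    ← naeSatisfies_iff_notMem_monochromaticTuples]

theorem count_doubly_nae_sat_clauses_general [Nonempty ι] (σ τ : V → Bool) :
    (Nat.card {c : ι → V × Bool // NAESatisfies σ c ∧ NAESatisfies τ c} : ℤ) =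
      (2 * (Fintype.card V : ℤ)) ^ Fintype.card ι - 4 * (Fintype.card V : ℤ) ^ Fintype.card ι +
        2 * (Nat.card {v // σ v = τ v} : ℤ) ^ Fintype.card ι +
        2 * ((Fintype.card V : ℤ) - Nat.card {v // σ v = τ v}) ^ Fintype.card ι := by
  classical
  have hagree : Nat.card {v // σ v = τ v} = #{v | σ v = τ v} := Nat.subtype_card _ (by simp)
  have hdiffer : (#{v | σ v ≠ τ v} : ℤ) = Fintype.card V - #{v | σ v = τ v} := by
    rw [eq_sub_iff_add_eq']
    exact_mod_cast card_filter_add_card_filter_not (s := univ) fun v ↦ σ v = τ v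
  have hclauses : Fintype.card (ι → V × Bool) = (2 * Fintype.card V) ^ Fintype.card ι := by
    simp [mul_comm]
  rw [card_naeSatisfies_both, cast_card_compl_union, card_monochromaticTuples_inter,
    card_monochromaticTuples, card_monochromaticTuples, card_satisfiedLiterals_inter,
    card_satisfiedLiterals_inter_compl, card_compl_satisfiedLiterals_inter,
    card_compl_satisfiedLiterals_inter_compl, compl_satisfiedLiterals, compl_satisfiedLiterals]
  simp only [card_satisfiedLiterals, hclauses, hagree]
  push_cast
  rw [hdiffer]
  ring

end Clauses

/-- If assignments `σ, τ` on `n` variables agree on exactly `z` variables, then the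
number of ordered `k`-clauses NAE-satisfied by both equals
`(2n)^k - 4 n^k + 2 z^k + 2 (n-z)^k`. -/
theorem count_doubly_nae_sat_clauses (n k z : ℕ) (hn : 0 < n) (hk : 0 < k)
    (σ τ : Fin n → Bool) (hz : Nat.card {v : Fin n // σ v = τ v} = z) :
    (Nat.card {c : Fin k → Fin n × Bool //
        ((∃ j, σ (c j).1 = (c j).2) ∧ (∃ j, σ (c j).1 ≠ (c j).2)) ∧
        ((∃ j, τ (c j).1 = (c j).2) ∧ (∃ j, τ (c j).1 ≠ (c j).2))} : ℤ) =
      (2 * (n : ℤ)) ^ k - 4 * (n : ℤ) ^ k + 2 * (z : ℤ) ^ k + 2 * ((n : ℤ) - z) ^ k := by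
  have : Nonempty (Fin k) := ⟨⟨0, hk⟩⟩
  simpa only [Fintype.card_fin, hz, NAESatisfies] using
    count_doubly_nae_sat_clauses_general (ι := Fin k) σ τ
end
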